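/- arXiv:1410.7535 — 2 statements merged into one kernel-verified Lean document; each statement's English description precedes it below -/
import Mathlib

section
/- Let G be a finite group satisfying Condition (4), and assume that G is not solvable. Then G is isomorphic to the alternating group A₅, the symmetric group S₅, or the alternating group A₆. -/
/-- The character value of the small Mathieu representation at an element of the given order. -/
def mathieuCharValue : ℕ → ℂ
  | 1 => 12
  | 2 => 4
  | 3 => 3
  | 4 => 4
  | 5 => 2
  | 6 => 1
  | 8 => 2
  | 11 => 1
  | _ => 0

/-- A representation is a small Mathieu representation if it is 12-dimensional, every group
element has order in {1,2,3,4,5,6,8,11}, and the character at `g` depends only on the order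
of `g`, with the values of the permutation character of `M₁₁` acting on 12 points. -/
def IsSmallMathieuRep {G : Type*} [Group G] {V : Type*} [AddCommGroup V] [Module ℂ V]
    (ρ : Representation ℂ G V) : Prop :=
  Module.finrank ℂ V = 12 ∧
    (∀ g : G, orderOf g ∈ ({1, 2, 3, 4, 5, 6, 8, 11} : Set ℕ)) ∧
    (∀ g : G, LinearMap.trace ℂ V (ρ g) = mathieuCharValue (orderOf g))

/-- `G` admits a small Mathieu representation. -/
def HasSmallMathieuRep (G : Type*) [Group G] : Prop :=
  ∃ (V : Type) (_ : AddCommGroup V) (_ : Module ℂ V) (ρ : Representation ℂ G V),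
    IsSmallMathieuRep ρ

/-- `G` admits a small Mathieu representation whose invariant subspace has dimension ≥ 3. -/
def HasSmallMathieuRep3 (G : Type*) [Group G] : Prop :=
  ∃ (V : Type) (_ : AddCommGroup V) (_ : Module ℂ V) (ρ : Representation ℂ G V),
    IsSmallMathieuRep ρ ∧ 3 ≤ Module.finrank ℂ ρ.invariants

/-- Condition (4): `G` has a small Mathieu representation `V` with `dim V^G ≥ 3`, the 2-Sylow
subgroups of `G` embed into `S₆`, and `G` is not isomorphic to the dicyclic group `Q₁₂`
(realized in Mathlib as `QuaternionGroup 3`). -/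
def Condition4 (G : Type*) [Group G] [Fintype G] : Prop :=
  HasSmallMathieuRep3 G ∧
    (∀ P : Sylow 2 G, ∃ f : P →* Equiv.Perm (Fin 6), Function.Injective f) ∧
    IsEmpty (G ≃* QuaternionGroup 3)

namespace SmallMathieu

/-- Natural-number version of the character values. -/
def cv : ℕ → ℕ
  | 1 => 12
  | 2 => 4
  | 3 => 3
  | 4 => 4
  | 5 => 2
  | 6 => 1
  | 8 => 2
  | 11 => 1
  | _ => 0

lemma cv_cast (n : ℕ) : mathieuCharValue n = (cv n : ℂ) := by
  unfold mathieuCharValue cv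
  split <;> simp

/-- Averaging: the sum of the character over the group is a multiple of the group order. -/
lemma sum_cv {G V : Type*} [Group G] [Fintype G] [AddCommGroup V] [Module ℂ V]
    (ρ : Representation ℂ G V) (hfin : Module.finrank ℂ V = 12)
    (hch : ∀ g : G, LinearMap.trace ℂ V (ρ g) = mathieuCharValue (orderOf g)) :
    ∑ g : G, cv (orderOf g) = Fintype.card G * Module.finrank ℂ ρ.invariants := by
  have : Module.Finite ℂ V := Module.finite_of_finrank_pos (by omega)
  have hc : (Fintype.card G : ℂ) ≠ 0 := by
    exact_mod_cast Fintype.card_ne_zero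
  let _ : Invertible (Fintype.card G : ℂ) := invertibleOfNonzero hc
  have h1 := (ρ.isProj_averageMap).trace
  have h2 : LinearMap.trace ℂ V ρ.averageMap
      = (Fintype.card G : ℂ)⁻¹ * ∑ g : G, LinearMap.trace ℂ V (ρ g) := by
    simp [Representation.averageMap, GroupAlgebra.average, map_sum]
  rw [h2] at h1
  have h3 : ∑ g : G, LinearMap.trace ℂ V (ρ g)
      = (Fintype.card G : ℂ) * Module.finrank ℂ ρ.invariants := by
    rw [← h1, mul_inv_cancel_left₀ hc]
  simp only [hch, cv_cast] at h3
  exact_mod_cast h3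

lemma sum_cv_sub {G V : Type*} [Group G] [Fintype G] [AddCommGroup V] [Module ℂ V]
    (ρ : Representation ℂ G V) (hfin : Module.finrank ℂ V = 12)
    (hch : ∀ g : G, LinearMap.trace ℂ V (ρ g) = mathieuCharValue (orderOf g))
    (h3 : 3 ≤ Module.finrank ℂ ρ.invariants) (H : Subgroup G) [Fintype H] :
    ∃ m, 3 ≤ m ∧ ∑ g : H, cv (orderOf g) = Fintype.card H * m := by
  have : Module.Finite ℂ V := Module.finite_of_finrank_pos (by omega)
  refine ⟨Module.finrank ℂ (Representation.invariants (ρ.comp H.subtype)), ?_, ?_⟩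
  · refine h3.trans (Submodule.finrank_mono ?_)
    intro v hv
    rw [Representation.mem_invariants] at hv ⊢
    intro g
    exact hv g
  · apply sum_cv _ hfin
    intro g
    have := hch g
    simpa [Subgroup.orderOf_coe] using this

lemma sum_cv_const {H : Type*} [Group H] [Fintype H] (k : ℕ)
    (hk : ∀ g : H, g ≠ 1 → cv (orderOf g) = k) :
    ∑ g : H, cv (orderOf g) = 12 + (Fintype.card H - 1) * k := by
  classical
  rw [← Finset.add_sum_erase Finset.univ _ (Finset.mem_univ (1 : H))]
  rw [Finset.sum_congr rfl (g := fun _ => k)]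
  · simp [Finset.card_erase_of_mem, cv]
  · intro g hg
    exact hk g (Finset.ne_of_mem_erase hg)

/-- Numerical consequences of Condition (4). -/
lemma numerics (G : Type*) [Group G] [Fintype G] (h : Condition4 G) :
    (∀ g : G, orderOf g ≤ 6) ∧ Nat.card G ∣ 360 ∧
      3 * Nat.card G ≤ ∑ g : G, cv (orderOf g) := by
  classical
  obtain ⟨⟨V, _, _, ρ, ⟨hfin, hord, hch⟩, h3⟩, hS, -⟩ := h
  have hsub := fun H : Subgroup G => sum_cv_sub ρ hfin hch h3 H
  have hfull := sum_cv ρ hfin hch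
  have hperm : ∀ s : Equiv.Perm (Fin 6), s ^ 8 = 1 → s ^ 4 = 1 := by decide +kernel
  have h8 : ∀ g : G, orderOf g ≠ 8 := by
    intro g hg
    have hp : IsPGroup 2 (Subgroup.zpowers g) := by
      apply IsPGroup.of_card (n := 3)
      rw [Nat.card_zpowers, hg]; norm_num
    obtain ⟨P, hP⟩ := hp.exists_le_sylow
    obtain ⟨f, hf⟩ := hS P
    let x : P := ⟨g, hP (Subgroup.mem_zpowers g)⟩
    have hx : orderOf x = 8 := by rw [← hg, ← Subgroup.orderOf_coe]
    have hfx : orderOf (f x) = 8 := by rw [orderOf_injective f hf, hx]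
    have h4 := hperm (f x) (by rw [← hfx]; exact pow_orderOf_eq_one _)
    have := orderOf_dvd_of_pow_eq_one h4
    rw [hfx] at this
    omega
  have h11 : ∀ g : G, orderOf g ≠ 11 := by
    intro g hg
    have hc : Fintype.card (Subgroup.zpowers g) = 11 := by
      rw [← Nat.card_eq_fintype_card, Nat.card_zpowers, hg]
    obtain ⟨m, hm, hs⟩ := hsub (Subgroup.zpowers g)
    rw [sum_cv_const 1, hc] at hs
    · omega
    · intro x hx
      have h1 : orderOf x ∣ 11 := by rw [← hc]; exact orderOf_dvd_card
      rcases (Nat.dvd_prime (by norm_num)).1 h1 with h | h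
      · exact absurd (orderOf_eq_one_iff.1 h) hx
      · rw [h]; rfl
  have h6 : ∀ g : G, orderOf g ≤ 6 := by
    intro g
    have := hord g
    have := h8 g
    have := h11 g
    simp only [Set.mem_insert_iff, Set.mem_singleton_iff] at *
    omega
  have hpow : ∀ (p n k : ℕ), p.Prime →
      (∀ j, j ∣ p ^ n → j ≤ 6 → j ≠ 1 → cv j = k) →
      (¬ p ^ n ∣ 12 + (p ^ n - 1) * k) → ¬ p ^ n ∣ Nat.card G := by
    intro p n k hp hk hnd hdvd
    have := Fact.mk hp
    obtain ⟨H, hH⟩ := Sylow.exists_subgroup_card_pow_prime p hdvd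
    have hc : Fintype.card H = p ^ n := by rw [← Nat.card_eq_fintype_card, hH]
    obtain ⟨m, hm, hs⟩ := hsub H
    rw [sum_cv_const k, hc] at hs
    · exact hnd ⟨m, hs⟩
    · intro x hx
      apply hk
      · rw [← hc]; exact orderOf_dvd_card
      · have := h6 x
        rwa [Subgroup.orderOf_coe] at this
      · intro h1; exact hx (orderOf_eq_one_iff.1 h1)
  have h25 : ¬ 5 ^ 2 ∣ Nat.card G := by
    refine hpow 5 2 2 (by norm_num) ?_ (by norm_num)
    intro j hj h6 h1
    interval_cases j <;> first | exact absurd rfl h1 | rfl | (exfalso; revert hj; norm_num) | omega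
  have h27 : ¬ 3 ^ 3 ∣ Nat.card G := by
    refine hpow 3 3 3 (by norm_num) ?_ (by norm_num)
    intro j hj h6 h1
    interval_cases j <;> first | exact absurd rfl h1 | rfl | (exfalso; revert hj; norm_num) | omega
  have h16 : ¬ 2 ^ 4 ∣ Nat.card G := by
    refine hpow 2 4 4 (by norm_num) ?_ (by norm_num)
    intro j hj h6 h1
    interval_cases j <;> first | exact absurd rfl h1 | rfl | (exfalso; revert hj; norm_num) | omega
  refine ⟨h6, ?_, ?_⟩
  · have hne : Nat.card G ≠ 0 := Nat.card_pos.ne'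
    rw [← Nat.factorization_le_iff_dvd hne (by norm_num)]
    intro p
    by_cases hp : p.Prime
    swap
    · simp [Nat.factorization_eq_zero_of_not_prime _ hp]
    have key : ∀ n, ¬ p ^ (n + 1) ∣ Nat.card G → p ^ n ∣ 360 →
        (Nat.card G).factorization p ≤ (360 : ℕ).factorization p := by
      intro n h1 h2
      have a := (hp.pow_dvd_iff_le_factorization (by norm_num : (360 : ℕ) ≠ 0)).1 h2
      rw [hp.pow_dvd_iff_le_factorization hne] at h1
      omega
    by_cases h2 : p = 2
    · subst h2; exact key 3 h16 (by norm_num)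
    by_cases h3 : p = 3
    · subst h3; exact key 2 h27 (by norm_num)
    by_cases h5 : p = 5
    · subst h5; exact key 1 h25 (by norm_num)
    · apply key 0 _ (by simp)
      intro hd
      rw [zero_add, pow_one] at hd
      have := Fact.mk hp
      obtain ⟨g, hg⟩ := exists_prime_orderOf_dvd_card' p hd
      have := h6 g
      rw [hg] at this
      have h2' := hp.two_le
      interval_cases p <;> first | omega | (revert hp; norm_num)
  · rw [hfull, Nat.card_eq_fintype_card, mul_comm]
    exact Nat.mul_le_mul_left _ h3

section General

variable {G : Type*} [Group G] [Finite G]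

lemma card_sylow_eq (hc : Nat.card G ∣ 360) (p n : ℕ) [hp : Fact p.Prime] (P : Sylow p G)
    (h1 : p ^ n ∣ Nat.card G) (h2 : ¬ p ^ (n + 1) ∣ 360) : Nat.card P = p ^ n := by
  have hne : Nat.card G ≠ 0 := Nat.card_pos.ne'
  rw [Sylow.card_eq_multiplicity]
  congr 1
  have a := (hp.out.pow_dvd_iff_le_factorization hne).1 h1
  have b : ¬ p ^ (n + 1) ∣ Nat.card G := fun h => h2 (h.trans hc)
  rw [hp.out.pow_dvd_iff_le_factorization hne] at b
  omega

/-- An element commuting with an element of order 5 is trivial or has order divisible by 5. -/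
lemma commute_five (hO : ∀ g : G, orderOf g ≤ 6) {x g : G} (hx : orderOf x = 5)
    (hxg : Commute x g) (h5 : ¬ 5 ∣ orderOf g) : g = 1 := by
  have hcop : (orderOf x).Coprime (orderOf g) := by
    rw [hx]; exact (Nat.Prime.coprime_iff_not_dvd (by norm_num)).2 h5
  have h1 := hxg.orderOf_mul_eq_mul_orderOf_of_coprime hcop
  have h2 := hO (x * g)
  rw [h1, hx] at h2
  have h3 : 0 < orderOf g := orderOf_pos g
  exact orderOf_eq_one_iff.1 (by omega)

/-- A subgroup of order prime to 5 normalized by an element of order 5 has order 1 mod 5. -/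
lemma card_mod_five (hO : ∀ g : G, orderOf g ≤ 6) {x : G} (hx : orderOf x = 5) (Q : Subgroup G)
    (hxQ : x ∈ Subgroup.normalizer (Q : Set G)) (h5 : ¬ 5 ∣ Nat.card Q) :
    Nat.card Q ≡ 1 [MOD 5] := by
  have : Fact (Nat.Prime 5) := ⟨by norm_num⟩
  have hle : Subgroup.zpowers x ≤ Subgroup.normalizer (Q : Set G) := by
    rwa [Subgroup.zpowers_le]
  let _ : MulAction (Subgroup.zpowers x) Q :=
    MulAction.compHom Q (Q.normalizerMonoidHom.comp (Subgroup.inclusion hle))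
  have hp : IsPGroup 5 (Subgroup.zpowers x) := by
    apply IsPGroup.of_card (n := 1)
    rw [Nat.card_zpowers, hx]; norm_num
  have h1 := hp.card_modEq_card_fixedPoints Q
  refine h1.trans ?_
  have : Nat.card (MulAction.fixedPoints (Subgroup.zpowers x) Q) = 1 := by
    rw [Nat.card_eq_one_iff_unique]
    constructor
    · constructor
      have key : ∀ q : MulAction.fixedPoints (Subgroup.zpowers x) Q, (q : Q) = 1 := by
        rintro ⟨q, hq⟩
        have h2 := hq ⟨x, Subgroup.mem_zpowers x⟩
        have h3 : x * (q : G) * x⁻¹ = q := congrArg Subtype.val h2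
        have h4 : Commute x (q : G) := by
          rw [commute_iff_eq]
          exact mul_inv_eq_iff_eq_mul.1 h3
        have h5' : ¬ 5 ∣ orderOf (q : G) := by
          intro h
          rw [Subgroup.orderOf_coe] at h
          exact h5 (h.trans (orderOf_dvd_natCard q))
        have := commute_five hO hx h4 h5'
        exact Subtype.ext this
      intro a b
      exact Subtype.ext ((key a).trans (key b).symm)
    · refine ⟨⟨1, fun g => ?_⟩⟩
      exact map_one (Q.normalizerMonoidHom (Subgroup.inclusion hle g))
  rw [this]

lemma dvd72 {n : ℕ} (h : n ∣ 360) (h5 : ¬ 5 ∣ n) : n ∣ 72 := by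
  have : Nat.Coprime n 5 := ((Nat.Prime.coprime_iff_not_dvd (by norm_num)).2 h5).symm
  exact this.dvd_of_dvd_mul_right (by simpa using h)

/-- A normal subgroup of order prime to 5 is trivial when `5` divides the group order. -/
lemma normal_eq_bot (hO : ∀ g : G, orderOf g ≤ 6) (hc : Nat.card G ∣ 360) (h5 : 5 ∣ Nat.card G)
    (K : Subgroup G) [K.Normal] (hK : ¬ 5 ∣ Nat.card K) : K = ⊥ := by
  have : Fact (Nat.Prime 5) := ⟨by norm_num⟩
  have : Fact (Nat.Prime 3) := ⟨by norm_num⟩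
  have hKc : Nat.card K ∣ 360 := K.card_subgroup_dvd_card.trans hc
  have h3 : ¬ 3 ∣ Nat.card K := by
    intro h3
    obtain ⟨S⟩ : Nonempty (Sylow 3 K) := inferInstance
    have hfr := Sylow.normalizer_sup_eq_top S
    set Q : Subgroup G := (S : Subgroup K).map K.subtype with hQ
    have hQc : Nat.card Q = Nat.card S := by
      exact (Nat.card_congr ((S : Subgroup K).equivMapOfInjective _
        K.subtype_injective).toEquiv).symm
    have hSc : Nat.card S = 3 ∨ Nat.card S = 9 := by
      by_cases h9 : 9 ∣ Nat.card K
      · right; exact card_sylow_eq hKc 3 2 S (by simpa using h9) (by norm_num)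
      · left
        rw [Sylow.card_eq_multiplicity]
        have hne : Nat.card K ≠ 0 := Nat.card_pos.ne'
        have a := (Nat.prime_three.pow_dvd_iff_le_factorization (k := 1) hne).1 (by simpa using h3)
        have b : ¬ 3 ^ 2 ∣ Nat.card K := by simpa using h9
        rw [Nat.prime_three.pow_dvd_iff_le_factorization hne] at b
        have : (Nat.card K).factorization 3 = 1 := by omega
        rw [this]; norm_num
    have h5N : 5 ∣ Nat.card (Subgroup.normalizer (Q : Set G)) := by
      have h1 : K.relIndex (Subgroup.normalizer (Q : Set G)) = K.index := by
        rw [← Subgroup.relIndex_sup_left, sup_comm, hfr, Subgroup.relIndex_top_right]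
      have h2 := K.card_mul_index
      rw [← h2] at h5
      rcases (Nat.Prime.dvd_mul (by norm_num)).1 h5 with h | h
      · exact absurd h hK
      · rw [← h1] at h
        exact h.trans (Subgroup.relIndex_dvd_card _ _)
    obtain ⟨x, hx⟩ := exists_prime_orderOf_dvd_card' 5 h5N
    have hm := card_mod_five hO (x := (x : G)) (by rw [Subgroup.orderOf_coe, hx]) Q x.2
      (by rw [hQc]; rcases hSc with h | h <;> rw [h] <;> norm_num)
    rw [hQc] at hm
    rcases hSc with h | h <;> rw [h] at hm <;> revert hm <;> decide
  obtain ⟨x, hx⟩ := exists_prime_orderOf_dvd_card' 5 h5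
  have hm := card_mod_five hO hx K (by rw [Subgroup.normalizer_eq_top]; trivial) hK
  have h72 := dvd72 hKc hK
  have h8 : Nat.card K ∣ 8 := by
    have : Nat.Coprime (Nat.card K) 9 := by
      have := ((Nat.Prime.coprime_iff_not_dvd Nat.prime_three).2 h3).symm
      exact (this.pow_right 2)
    exact this.dvd_of_dvd_mul_right (by simpa using h72)
  have hle : Nat.card K ≤ 8 := Nat.le_of_dvd (by norm_num) h8
  have : Nat.card K = 1 := by
    unfold Nat.ModEq at hm
    generalize Nat.card K = n at *
    interval_cases n <;> omega
  exact Subgroup.card_eq_one.1 this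

/-- Counting elements of prime order when Sylow subgroups are elementary abelian and TI. -/
lemma card_orderOf_eq (p q : ℕ) [hp : Fact p.Prime]
    (hexp : ∀ (P : Sylow p G) (x : G), x ∈ P → x ^ p = 1)
    (hq : ∀ P : Sylow p G, Nat.card P = q)
    (hTI : ∀ (P Q : Sylow p G) (x : G), x ∈ P → x ∈ Q → x ≠ 1 → P = Q) :
    Nat.card {g : G // orderOf g = p} = Nat.card (Sylow p G) * (q - 1) := by
  classical
  have := Fintype.ofFinite (Sylow p G)
  let F : (Σ P : Sylow p G, {x : P // x ≠ 1}) → {g : G // orderOf g = p} := fun s =>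
    ⟨(s.2.1 : G), orderOf_eq_prime (hexp s.1 _ s.2.1.2)
      (fun h => s.2.2 (Subtype.ext h))⟩
  have hF : Function.Bijective F := by
    constructor
    · rintro ⟨P, ⟨x, hxP⟩, hx⟩ ⟨Q, ⟨y, hyQ⟩, hy⟩ h
      have hxy : x = y := congrArg Subtype.val h
      subst hxy
      have : P = Q := hTI P Q x hxP hyQ (fun h => hx (Subtype.ext h))
      subst this
      rfl
    · rintro ⟨g, hg⟩
      have hpg : IsPGroup p (Subgroup.zpowers g) := by
        apply IsPGroup.of_card (n := 1)
        rw [Nat.card_zpowers, hg, pow_one]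
      obtain ⟨P, hP⟩ := hpg.exists_le_sylow
      refine ⟨⟨P, ⟨g, hP (Subgroup.mem_zpowers g)⟩, ?_⟩, rfl⟩
      intro h
      have : g = 1 := congrArg Subtype.val h
      rw [this, orderOf_one] at hg
      exact hp.out.one_lt.ne hg
  rw [← Nat.card_congr (Equiv.ofBijective F hF), Nat.card_sigma]
  have : ∀ P : Sylow p G, Nat.card {x : P // x ≠ 1} = q - 1 := by
    intro P
    have := Fintype.ofFinite P
    rw [Nat.card_eq_fintype_card, Fintype.card_subtype_compl, Fintype.card_subtype_eq,
      ← Nat.card_eq_fintype_card]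
    exact congrArg (· - 1) (hq P)
  simp [this]

lemma card_order_five (hc : Nat.card G ∣ 360) (h5 : 5 ∣ Nat.card G) :
    Nat.card {g : G // orderOf g = 5} = Nat.card (Sylow 5 G) * 4 := by
  have : Fact (Nat.Prime 5) := ⟨by norm_num⟩
  have hq : ∀ P : Sylow 5 G, Nat.card P = 5 := fun P => by
    simpa using card_sylow_eq hc 5 1 P (by simpa using h5) (by norm_num)
  have hexp : ∀ (P : Sylow 5 G) (x : G), x ∈ P → x ^ 5 = 1 := by
    intro P x hx
    have := pow_card_eq_one' (x := (⟨x, hx⟩ : (P : Subgroup G)))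
    rw [hq] at this
    exact congrArg Subtype.val this
  have hz : ∀ (P : Sylow 5 G) (x : G), x ∈ P → x ≠ 1 → (P : Subgroup G) = Subgroup.zpowers x := by
    intro P x hx hx1
    symm
    apply Subgroup.eq_of_le_of_card_ge
    · rw [Subgroup.zpowers_le]; exact hx
    · rw [Nat.card_zpowers, orderOf_eq_prime (hexp P x hx) hx1]
      exact (hq P).le
  apply card_orderOf_eq 5 5 hexp hq
  intro P Q x hP hQ hx
  exact Sylow.ext ((hz P x hP hx).trans (hz Q x hQ hx).symm)

/-- A normal subgroup whose order is divisible by 5 contains all elements of order 5. -/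
lemma normal_large (hc : Nat.card G ∣ 360) (K : Subgroup G) [K.Normal] (hK : 5 ∣ Nat.card K) :
    Nat.card (Sylow 5 G) * 4 + 1 ≤ Nat.card K := by
  have : Fact (Nat.Prime 5) := ⟨by norm_num⟩
  have h5 : 5 ∣ Nat.card G := hK.trans K.card_subgroup_dvd_card
  have hq : ∀ P : Sylow 5 G, Nat.card P = 5 := fun P => by
    simpa using card_sylow_eq hc 5 1 P (by simpa using h5) (by norm_num)
  obtain ⟨x, hx⟩ := exists_prime_orderOf_dvd_card' 5 hK
  have hpg : IsPGroup 5 (Subgroup.zpowers (x : G)) := by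
    apply IsPGroup.of_card (n := 1)
    rw [Nat.card_zpowers, Subgroup.orderOf_coe, hx, pow_one]
  obtain ⟨P, hP⟩ := hpg.exists_le_sylow
  have hPK : (P : Subgroup G) ≤ K := by
    have : Subgroup.zpowers (x : G) = P := by
      apply Subgroup.eq_of_le_of_card_ge hP
      rw [Nat.card_zpowers, Subgroup.orderOf_coe, hx]
      exact (hq P).le
    rw [← this, Subgroup.zpowers_le]
    exact x.2
  have hall : ∀ g : G, orderOf g = 5 → g ∈ K := by
    intro g hg
    have hpg : IsPGroup 5 (Subgroup.zpowers g) := by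
      apply IsPGroup.of_card (n := 1)
      rw [Nat.card_zpowers, hg, pow_one]
    obtain ⟨P', hP'⟩ := hpg.exists_le_sylow
    obtain ⟨h, rfl⟩ := MulAction.exists_smul_eq G P P'
    have hg' : g ∈ (h • P : Sylow 5 G) := hP' (Subgroup.mem_zpowers g)
    have : h⁻¹ * g * h ∈ (P : Subgroup G) := by
      have h2 : g ∈ ((h • P : Sylow 5 G) : Subgroup G) := hg'
      rw [Sylow.coe_subgroup_smul, Subgroup.mem_pointwise_smul_iff_inv_smul_mem] at h2
      simpa [← map_inv, MulAut.smul_def] using h2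
    have h3 := ‹K.Normal›.conj_mem _ (hPK this) h
    have e : h * (h⁻¹ * g * h) * h⁻¹ = g := by group
    rwa [e] at h3
  rw [← card_order_five hc h5, ← Finite.card_option]
  apply Nat.card_le_card_of_injective
    (fun o : Option {g : G // orderOf g = 5} =>
      match o with
      | none => (1 : K)
      | some g => ⟨g.1, hall g.1 g.2⟩)
  have hne : ∀ g : {g : G // orderOf g = 5}, g.1 ≠ 1 := by
    intro g h
    have := g.2
    rw [h, orderOf_one] at this
    omega
  rintro (_ | a) (_ | b) h
  · rfl
  · exact absurd (congrArg Subtype.val h).symm (hne b)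
  · exact absurd (congrArg Subtype.val h) (hne a)
  · have : (⟨a.1, hall a.1 a.2⟩ : K) = ⟨b.1, hall b.1 b.2⟩ := h
    have : a.1 = b.1 := congrArg (fun z : K => (z : G)) this
    rw [Subtype.ext this]

/-- The possible orders when `5` divides the group order. -/
lemma order_cases (hO : ∀ g : G, orderOf g ≤ 6) (hc : Nat.card G ∣ 360) (h5 : 5 ∣ Nat.card G)
    (P : Sylow 5 G) :
    (Nat.card (Sylow 5 G) = 1 ∧ Nat.card G ∣ 20) ∨
    (Nat.card (Sylow 5 G) = 6 ∧ (Nat.card G = 60 ∨ Nat.card G = 120)) ∨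
    (Nat.card (Sylow 5 G) = 36 ∧ Nat.card G = 360) := by
  have : Fact (Nat.Prime 5) := ⟨by norm_num⟩
  have hP : Nat.card P = 5 := by
    simpa using card_sylow_eq hc 5 1 P (by simpa using h5) (by norm_num)
  have hcyc : IsCyclic P := isCyclic_of_prime_card hP
  have hcomm : (P : Subgroup G) ≤ Subgroup.centralizer (P : Set G) := by
    have hcm : IsMulCommutative (P : Subgroup G) := IsCyclic.isMulCommutative
    intro x hx y hy
    exact congrArg Subtype.val (hcm.is_comm.comm (⟨y, hy⟩ : (P : Subgroup G)) ⟨x, hx⟩)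
  obtain ⟨x, hx⟩ := exists_prime_orderOf_dvd_card' (G := P) 5 (by rw [hP])
  have hC : Nat.card (Subgroup.centralizer (P : Set G)) = 5 := by
    have h1 : Nat.card (Subgroup.centralizer (P : Set G)) ∣ 360 :=
      (Subgroup.card_subgroup_dvd_card _).trans hc
    have h2 : 5 ∣ Nat.card (Subgroup.centralizer (P : Set G)) := by
      have := Subgroup.card_dvd_of_le hcomm
      rwa [show Nat.card ((P : Subgroup G)) = 5 from hP] at this
    have hno : ∀ q : ℕ, q.Prime → q ≠ 5 → ¬ q ∣ Nat.card (Subgroup.centralizer (P : Set G)) := by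
      intro q hq hq5 hd
      have := Fact.mk hq
      obtain ⟨y, hy⟩ := exists_prime_orderOf_dvd_card' q hd
      have hyx : Commute (x : G) (y : G) := y.2 (x : G) x.2
      have h1 := commute_five hO (x := (x : G)) (g := (y : G))
        (by rw [Subgroup.orderOf_coe, hx]) hyx
        (by
          rw [Subgroup.orderOf_coe, hy]
          intro h
          rcases (Nat.dvd_prime hq).1 h with h | h <;> omega)
      rw [← Subgroup.orderOf_coe, h1, orderOf_one] at hy
      exact hq.one_lt.ne hy
    have h3 := hno 3 (by norm_num) (by norm_num)
    have h4 := hno 2 (by norm_num) (by norm_num)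
    generalize Nat.card (Subgroup.centralizer (P : Set G)) = n at *
    have hco : Nat.Coprime n 72 := by
      rw [show 72 = 2 ^ 3 * 3 ^ 2 by norm_num]
      apply Nat.Coprime.mul_right
      · exact (((Nat.Prime.coprime_iff_not_dvd Nat.prime_two).2 h4).symm).pow_right 3
      · exact (((Nat.Prime.coprime_iff_not_dvd Nat.prime_three).2 h3).symm).pow_right 2
    exact Nat.dvd_antisymm (hco.dvd_of_dvd_mul_right (m := 5) (by simpa using h1)) h2
  have hPC : (P : Subgroup G) = Subgroup.centralizer (P : Set G) := by
    apply Subgroup.eq_of_le_of_card_ge hcomm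
    rw [hC]; exact hP.ge
  set N := Subgroup.normalizer (P : Set G) with hN
  have hPN : (P : Subgroup G) ≤ N := Subgroup.le_normalizer
  have hNk : ∃ k, k ∣ 4 ∧ Nat.card N = k * 5 := by
    let f := (P : Subgroup G).normalizerMonoidHom
    refine ⟨Nat.card (N ⧸ f.ker), ?_, ?_⟩
    · have key := Subgroup.card_dvd_of_injective _ (QuotientGroup.kerLift_injective f)
      rw [IsCyclic.card_mulAut, show Nat.card ((P : Subgroup G)) = 5 from hP] at key
      exact key
    · refine (Subgroup.card_eq_card_quotient_mul_card_subgroup f.ker).trans ?_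
      congr 1
      have hker : f.ker = (Subgroup.centralizer ((P : Subgroup G) : Set G)).subgroupOf
          (Subgroup.normalizer ((P : Subgroup G) : Set G)) :=
        Subgroup.normalizerMonoidHom_ker _
      have hle : Subgroup.centralizer ((P : Subgroup G) : Set G) ≤
          Subgroup.normalizer ((P : Subgroup G) : Set G) := by
        have : Subgroup.centralizer (P : Set G) ≤ N := by rw [← hPC]; exact hPN
        exact this
      rw [hker, Nat.card_congr (Subgroup.subgroupOfEquivOfLe hle).toEquiv]
      exact hC
  obtain ⟨k, hk4, hNc⟩ := hNk
  have hidx : Nat.card (Sylow 5 G) = N.index := P.card_eq_index_normalizer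
  have hmul := N.card_mul_index
  rw [← hidx, hNc] at hmul
  have hmod : Nat.card (Sylow 5 G) ≡ 1 [MOD 5] := card_sylow_modEq_one 5 G
  have hk : k = 1 ∨ k = 2 ∨ k = 4 := by
    have : k ≤ 4 := Nat.le_of_dvd (by norm_num) hk4
    interval_cases k <;> omega
  have h72 : k * Nat.card (Sylow 5 G) ∣ 72 := by
    have : 5 * (k * Nat.card (Sylow 5 G)) ∣ 5 * 72 := by
      rw [show 5 * (k * Nat.card (Sylow 5 G)) = Nat.card G by rw [← hmul]; ring]
      exact hc
    exact Nat.dvd_of_mul_dvd_mul_left (by norm_num) this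
  by_cases hk1 : k = 1
  · left
    have hNC : N ≤ Subgroup.centralizer (P : Set G) := by
      rw [← hPC]
      apply le_of_eq
      symm
      apply Subgroup.eq_of_le_of_card_ge hPN
      rw [hNc, hk1]; exact hP.ge
    have hcompl := MonoidHom.ker_transferSylow_isComplement' P hNC
    have hnd := MonoidHom.not_dvd_card_ker_transferSylow P hNC
    have hb := normal_eq_bot hO hc h5 _ hnd
    have h1 := hcompl.card_mul_card
    rw [hb] at h1
    have h2 : Nat.card G = 5 := by
      rw [← h1, show Nat.card ((P : Subgroup G)) = 5 from hP]; simp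
    rw [h2, hk1] at hmul
    exact ⟨by omega, by rw [h2]; norm_num⟩
  · unfold Nat.ModEq at hmod
    have hle : k * Nat.card (Sylow 5 G) ≤ 72 := Nat.le_of_dvd (by norm_num) h72
    generalize Nat.card (Sylow 5 G) = n at *
    rw [← hmul]
    clear hidx hNc
    rcases hk with rfl | rfl | rfl
    · omega
    · have : n ≤ 36 := by omega
      interval_cases n <;> omega
    · have : n ≤ 18 := by omega
      interval_cases n <;> omega

end General

section Solv

lemma solv_pgroup {G : Type*} [Group G] [Finite G] (p n : ℕ) (hp : p.Prime)
    (h : Nat.card G ∣ p ^ n) : Group.IsSolvable G := by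
  have := Fact.mk hp
  obtain ⟨k, -, hk⟩ := (Nat.dvd_prime_pow hp).1 h
  have := (IsPGroup.of_card hk).isNilpotent
  infer_instance

lemma solv_ext {G : Type*} [Group G] (K : Subgroup G) [K.Normal] (h1 : Group.IsSolvable K)
    (h2 : Group.IsSolvable (G ⧸ K)) : Group.IsSolvable G :=
  (Group.isSolvable_iff_subgroup_quotient K).2 ⟨h1, h2⟩

lemma solv_two {G : Type*} [Group G] [Finite G] (K : Subgroup G) [K.Normal] (p n q m : ℕ)
    (hp : p.Prime) (hq : q.Prime) (h1 : Nat.card K ∣ p ^ n) (h2 : K.index ∣ q ^ m) :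
    Group.IsSolvable G := by
  refine solv_ext K (solv_pgroup p n hp h1) (solv_pgroup q m hq ?_)
  exact h2

lemma solv_perm4 : Group.IsSolvable (Equiv.Perm (Fin 4)) := by
  have hA : Group.IsSolvable (alternatingGroup (Fin 4)) := by
    have h4 : Nat.card (Fin 4) = 4 := by simp
    have := alternatingGroup.normal_kleinFour h4
    have hk := alternatingGroup.kleinFour_card_of_card_eq_four h4
    have hc := alternatingGroup.card_of_card_eq_four h4
    have hi := (alternatingGroup.kleinFour (Fin 4)).card_mul_index
    rw [hk, hc] at hi
    exact solv_two (alternatingGroup.kleinFour (Fin 4)) 2 2 3 1 (by norm_num) (by norm_num)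
      (by rw [hk]; norm_num) (by rw [show (alternatingGroup.kleinFour (Fin 4)).index = 3 by omega]; norm_num)
  refine solv_ext (alternatingGroup (Fin 4)) hA (solv_pgroup 2 1 (by norm_num) ?_)
  change (alternatingGroup (Fin 4)).index ∣ _
  rw [alternatingGroup.index_eq_two]
  norm_num

lemma solv_perm {α : Type*} [Finite α] (h : Nat.card α ≤ 4) :
    Group.IsSolvable (Equiv.Perm α) := by
  have := Fintype.ofFinite α
  rw [Nat.card_eq_fintype_card] at h
  have e : Nonempty (α ↪ Fin 4) := Function.Embedding.nonempty_of_card_le (by simpa using h)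
  obtain ⟨e⟩ := e
  have := solv_perm4
  exact Group.isSolvable_of_isSolvable_injective (Equiv.Perm.viaEmbeddingHom_injective e)

lemma solv72 {G : Type*} [Group G] [Finite G] (h : Nat.card G ∣ 72) : Group.IsSolvable G := by
  have : Fact (Nat.Prime 3) := ⟨by norm_num⟩
  obtain ⟨S⟩ : Nonempty (Sylow 3 G) := inferInstance
  have hidx : (S : Subgroup G).index ∣ 8 := by
    have h1 : (S : Subgroup G).index ∣ 72 := (Subgroup.index_dvd_card _).trans h
    have h2 : ¬ 3 ∣ (S : Subgroup G).index := S.not_dvd_index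
    have : Nat.Coprime (S : Subgroup G).index 9 :=
      ((Nat.Prime.coprime_iff_not_dvd Nat.prime_three).2 h2).symm.pow_right 2
    exact this.dvd_of_dvd_mul_right (by simpa using h1)
  have hn : Nat.card (Sylow 3 G) ∣ 8 := S.card_dvd_index.trans hidx
  have hm : Nat.card (Sylow 3 G) ≡ 1 [MOD 3] := card_sylow_modEq_one 3 G
  have hle : Nat.card (Sylow 3 G) ≤ 4 := by
    unfold Nat.ModEq at hm
    have := Nat.le_of_dvd (by norm_num) hn
    generalize Nat.card (Sylow 3 G) = n at *
    interval_cases n <;> omega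
  have hperm := solv_perm hle
  let f := MulAction.toPermHom G (Sylow 3 G)
  have hN : Group.IsSolvable (Subgroup.normalizer (S : Set G)) := by
    set N := Subgroup.normalizer (S : Set G) with hN
    have hle : (S : Subgroup G) ≤ N := Subgroup.le_normalizer
    have : ((S : Subgroup G).subgroupOf N).Normal := Subgroup.normal_in_normalizer
    obtain ⟨k, hk⟩ := (IsPGroup.iff_card (p := 3)).1 S.isPGroup'
    refine solv_two ((S : Subgroup G).subgroupOf N) 3 k 2 3 (by norm_num) (by norm_num) ?_ ?_
    · rw [Nat.card_congr (Subgroup.subgroupOfEquivOfLe hle).toEquiv, hk]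
    · refine dvd_trans ?_ hidx
      exact Subgroup.relIndex_dvd_index_of_le hle
  have hK : Group.IsSolvable f.ker := by
    have hle : f.ker ≤ Subgroup.normalizer (S : Set G) := by
      intro g hg
      rw [← Sylow.smul_eq_iff_mem_normalizer]
      have : f g = 1 := hg
      exact congrArg (fun s : Equiv.Perm (Sylow 3 G) => s S) this
    exact Group.isSolvable_of_isSolvable_injective (Subgroup.inclusion_injective hle)
  refine solv_ext f.ker hK ?_
  exact Group.isSolvable_of_isSolvable_injective (QuotientGroup.kerLift_injective f)

/-- Non-solvable groups in our situation have order 60, 120 or 360. -/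
lemma nonsolv_cases {G : Type*} [Group G] [Finite G] (hO : ∀ g : G, orderOf g ≤ 6)
    (hc : Nat.card G ∣ 360) (hns : ¬ Group.IsSolvable G) : 5 ∣ Nat.card G ∧
    ((Nat.card (Sylow 5 G) = 6 ∧ (Nat.card G = 60 ∨ Nat.card G = 120)) ∨
    (Nat.card (Sylow 5 G) = 36 ∧ Nat.card G = 360)) := by
  have : Fact (Nat.Prime 5) := ⟨by norm_num⟩
  have h5 : 5 ∣ Nat.card G := by
    by_contra h5
    exact hns (solv72 (dvd72 hc h5))
  refine ⟨h5, ?_⟩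
  obtain ⟨P⟩ : Nonempty (Sylow 5 G) := inferInstance
  rcases order_cases hO hc h5 P with ⟨h1, h2⟩ | h | h
  · exfalso
    have : Subsingleton (Sylow 5 G) := (Nat.card_eq_one_iff_unique.1 h1).1
    have hPn : (P : Subgroup G).Normal := P.normal_of_subsingleton
    have hP : Nat.card P = 5 := by
      simpa using card_sylow_eq hc 5 1 P (by simpa using h5) (by norm_num)
    refine hns (solv_two (P : Subgroup G) 5 1 2 2 (by norm_num) (by norm_num) (by rw [hP]; norm_num) ?_)
    have := (P : Subgroup G).card_mul_index
    rw [show Nat.card (P : Subgroup G) = 5 from hP] at this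
    rw [← this] at h2
    exact Nat.dvd_of_mul_dvd_mul_left (k := 5) (by norm_num) h2
  · exact Or.inl h
  · exact Or.inr h

end Solv

section Small

lemma stab_perm {X α : Type*} [Group X] [MulAction X α] (a : α) (n : ℕ)
    (hcard : Nat.card {q : α // q ≠ a} = n) [Finite α]
    (hfaith : ∀ g : X, (∀ q : α, g • q = q) → g = 1) :
    ∃ f : MulAction.stabilizer X a →* Equiv.Perm (Fin n), Function.Injective f := by
  have e : {q : α // q ≠ a} ≃ Fin n := Finite.equivFinOfCardEq hcard
  let act : MulAction (MulAction.stabilizer X a) {q : α // q ≠ a} :=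
    { smul := fun g q => ⟨(g : X) • q.1, fun h => q.2 (by
        have h1 : (g : X) • a = a := g.2
        exact MulAction.injective (g : X) (h.trans h1.symm))⟩
      one_smul := fun q => Subtype.ext (one_smul X q.1)
      mul_smul := fun g h q => Subtype.ext (mul_smul (g : X) (h : X) q.1) }
  let f1 := MulAction.toPermHom (MulAction.stabilizer X a) {q : α // q ≠ a}
  have hf1 : Function.Injective f1 := by
    rw [injective_iff_map_eq_one]
    intro g hg
    apply Subtype.ext
    apply hfaith
    intro q
    by_cases hq : q = a
    · rw [hq]; exact g.2
    · have h1 : f1 g ⟨q, hq⟩ = ⟨q, hq⟩ := by rw [hg]; rfl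
      exact congrArg (fun z : {q : α // q ≠ a} => z.1) h1
  exact ⟨e.permCongrHom.toMonoidHom.comp f1, e.permCongrHom.injective.comp hf1⟩

/-- The stabilizer of a point in a faithful action on six points acts faithfully on the rest. -/
lemma exists_perm5 {X : Type*} [Group X] [Finite X] (H : Subgroup X) (hi : H.index = 6)
    (hcore : H.normalCore = ⊥) :
    ∃ f : H →* Equiv.Perm (Fin 5), Function.Injective f := by
  have hst : MulAction.stabilizer X ((1 : X) : X ⧸ H) = H := MulAction.stabilizer_quotient H
  obtain ⟨f, hf⟩ := stab_perm (X := X) ((1 : X) : X ⧸ H) 5 (by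
    have h6 : Nat.card (X ⧸ H) = 6 := hi
    classical
    have := Fintype.ofFinite (X ⧸ H)
    rw [Nat.card_eq_fintype_card] at h6 ⊢
    have := Fintype.card_subtype_compl (fun q : X ⧸ H => q = ((1 : X) : X ⧸ H))
    rw [Fintype.card_subtype_eq, h6] at this
    convert this) (by
    intro g hg
    have hmem : (g : X) ∈ H.normalCore := by
      rw [Subgroup.normalCore_eq_ker, MonoidHom.mem_ker]
      ext q
      exact hg q
    rwa [hcore, Subgroup.mem_bot] at hmem)
  exact ⟨f.comp (MulEquiv.subgroupCongr hst.symm).toMonoidHom,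
    hf.comp (MulEquiv.subgroupCongr hst.symm).injective⟩

lemma iso_alternating {G : Type*} [Group G] [Finite G] (n : ℕ) (f : G →* Equiv.Perm (Fin n))
    (hf : Function.Injective f) (hc : 2 * Nat.card G = n.factorial) :
    Nonempty (G ≃* alternatingGroup (Fin n)) := by
  have e := MonoidHom.ofInjective hf
  have hcr : Nat.card f.range = Nat.card G := (Nat.card_congr e.toEquiv).symm
  have hi := f.range.card_mul_index
  rw [hcr, Nat.card_perm, Nat.card_fin, ← hc, mul_comm 2] at hi
  have h2 : f.range.index = 2 := Nat.eq_of_mul_eq_mul_left Nat.card_pos hi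
  have := Equiv.Perm.eq_alternatingGroup_of_index_eq_two h2
  exact ⟨e.trans (MulEquiv.subgroupCongr this)⟩

lemma exists_perm6 {G : Type*} [Group G] [Finite G] (hO : ∀ g : G, orderOf g ≤ 6)
    (hc : Nat.card G ∣ 360) (h5 : 5 ∣ Nat.card G) (hn : Nat.card (Sylow 5 G) = 6)
    (hle : Nat.card G ≤ 120) : ∃ f : G →* Equiv.Perm (Fin 6), Function.Injective f := by
  have : Fact (Nat.Prime 5) := ⟨by norm_num⟩
  let f := MulAction.toPermHom G (Sylow 5 G)
  have e : Sylow 5 G ≃ Fin 6 := Finite.equivFinOfCardEq hn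
  obtain ⟨S⟩ : Nonempty (Sylow 5 G) := inferInstance
  have hker : f.ker = ⊥ := by
    apply normal_eq_bot hO hc h5
    intro hd
    have h1 := normal_large hc f.ker hd
    have hle : f.ker ≤ Subgroup.normalizer (S : Set G) := by
      intro g hg
      rw [← Sylow.smul_eq_iff_mem_normalizer]
      have : f g = 1 := hg
      exact congrArg (fun s : Equiv.Perm (Sylow 5 G) => s S) this
    have h2 := Subgroup.card_le_of_le hle
    have h3 := (Subgroup.normalizer (S : Set G)).card_mul_index
    rw [← S.card_eq_index_normalizer] at h3
    rw [hn] at h1 h3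
    omega
  exact ⟨e.permCongrHom.toMonoidHom.comp f,
    e.permCongrHom.injective.comp ((MonoidHom.ker_eq_bot_iff f).1 hker)⟩

lemma card_A6 : Nat.card (alternatingGroup (Fin 6)) = 360 := by
  have := (alternatingGroup (Fin 6)).card_mul_index
  rw [alternatingGroup.index_eq_two, Nat.card_perm, Nat.card_fin] at this
  have h : Nat.factorial 6 = 720 := rfl
  omega

lemma case60 {G : Type*} [Group G] [Finite G] (hO : ∀ g : G, orderOf g ≤ 6)
    (h60 : Nat.card G = 60) (hn : Nat.card (Sylow 5 G) = 6) :
    Nonempty (G ≃* alternatingGroup (Fin 5)) := by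
  have : Fact (Nat.Prime 5) := ⟨by norm_num⟩
  obtain ⟨j, hj⟩ := exists_perm6 hO (by rw [h60]; norm_num) (by rw [h60]; norm_num) hn (by omega)
  have hA : ∀ g, j g ∈ alternatingGroup (Fin 6) := by
    let s := Equiv.Perm.sign.comp j
    suffices h : s.ker = ⊤ by
      intro g
      rw [Equiv.Perm.mem_alternatingGroup]
      have : g ∈ s.ker := by rw [h]; trivial
      exact this
    have hi : s.ker.index ∣ 2 := by
      have h1 := Subgroup.card_dvd_of_injective _ (QuotientGroup.kerLift_injective s)
      have h2 : Nat.card ℤˣ = 2 := by simp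
      rw [h2] at h1
      exact h1
    have hm := s.ker.card_mul_index
    rcases (Nat.dvd_prime Nat.prime_two).1 hi with h | h
    · exact Subgroup.index_eq_one.1 h
    · exfalso
      rw [h, h60] at hm
      have h30 : Nat.card s.ker = 30 := by omega
      obtain ⟨P⟩ : Nonempty (Sylow 5 s.ker) := inferInstance
      have := order_cases (G := s.ker) (fun g => by
        have := hO g; rwa [Subgroup.orderOf_coe] at this) (by rw [h30]; norm_num)
        (by rw [h30]; norm_num) P
      rw [h30] at this
      omega
  let j' : G →* alternatingGroup (Fin 6) := j.codRestrict _ hA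
  have hj' : Function.Injective j' := by
    intro a b hab
    exact hj (congrArg Subtype.val hab)
  have e := MonoidHom.ofInjective hj'
  have hcr : Nat.card j'.range = 60 := by rw [← h60]; exact (Nat.card_congr e.toEquiv).symm
  have hi := j'.range.card_mul_index
  rw [hcr, card_A6] at hi
  have hsimple := alternatingGroup.isSimpleGroup (α := Fin 6) (by simp)
  have hcore : j'.range.normalCore = ⊥ := by
    rcases hsimple.eq_bot_or_eq_top_of_normal j'.range.normalCore inferInstance with h | h
    · exact h
    · exfalso
      have h1 : j'.range = ⊤ := top_le_iff.1 (h ▸ j'.range.normalCore_le)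
      rw [h1, Subgroup.index_top] at hi
      omega
  obtain ⟨f, hf⟩ := exists_perm5 j'.range (by omega) hcore
  exact iso_alternating 5 (f.comp e.toMonoidHom) (hf.comp e.injective) (by rw [h60]; rfl)

lemma case120 {G : Type*} [Group G] [Finite G] (hO : ∀ g : G, orderOf g ≤ 6)
    (h120 : Nat.card G = 120) (hn : Nat.card (Sylow 5 G) = 6) :
    Nonempty (G ≃* Equiv.Perm (Fin 5)) := by
  obtain ⟨j, hj⟩ := exists_perm6 hO (by rw [h120]; norm_num) (by rw [h120]; norm_num) hn (by omega)
  have e := MonoidHom.ofInjective hj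
  have hcr : Nat.card j.range = 120 := by rw [← h120]; exact (Nat.card_congr e.toEquiv).symm
  have hi := j.range.card_mul_index
  rw [hcr, Nat.card_perm, Nat.card_fin, show Nat.factorial 6 = 720 from rfl] at hi
  have hsimple := alternatingGroup.isSimpleGroup (α := Fin 6) (by simp)
  set K := j.range.normalCore with hK
  have hKle : K ≤ j.range := j.range.normalCore_le
  have hKn : K.Normal := Subgroup.normalCore_normal _
  have hdisj : K.subgroupOf (alternatingGroup (Fin 6)) = ⊥ := by
    rcases hsimple.eq_bot_or_eq_top_of_normal (K.subgroupOf (alternatingGroup (Fin 6)))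
      inferInstance with h | h
    · exact h
    · exfalso
      rw [Subgroup.subgroupOf_eq_top] at h
      have := Subgroup.card_le_of_le (h.trans hKle)
      rw [card_A6, hcr] at this
      omega
  have hK2 : Nat.card K ∣ 2 := by
    have hinj : Function.Injective (Equiv.Perm.sign.comp K.subtype) := by
      rw [injective_iff_map_eq_one]
      intro k hk
      have hkA : (k : Equiv.Perm (Fin 6)) ∈ alternatingGroup (Fin 6) :=
        Equiv.Perm.mem_alternatingGroup.2 hk
      have h1 : (⟨k, hkA⟩ : alternatingGroup (Fin 6)) ∈ K.subgroupOf (alternatingGroup (Fin 6)) :=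
        k.2
      rw [hdisj, Subgroup.mem_bot] at h1
      have h2 : (k : Equiv.Perm (Fin 6)) = 1 :=
        congrArg (fun z : alternatingGroup (Fin 6) => (z : Equiv.Perm (Fin 6))) h1
      exact Subtype.ext h2
    have h1 := Subgroup.card_dvd_of_injective _ hinj
    have h2 : Nat.card ℤˣ = 2 := by simp
    rwa [h2] at h1
  have hbot : K.comap j = ⊥ := by
    apply normal_eq_bot hO (by rw [h120]; norm_num) (by rw [h120]; norm_num)
    intro hd
    have h1 : Nat.card (K.comap j) ∣ Nat.card K := by
      apply Subgroup.card_dvd_of_injective (j.subgroupComap K)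
      intro a b hab
      exact Subtype.ext (hj (congrArg Subtype.val hab))
    have := Nat.le_of_dvd (by norm_num) (hd.trans (h1.trans hK2))
    omega
  have hcore : K = ⊥ := by
    rw [eq_bot_iff]
    intro k hk
    obtain ⟨g, rfl⟩ := hKle hk
    have : g ∈ K.comap j := hk
    rw [hbot, Subgroup.mem_bot] at this
    rw [this, map_one]
    exact Subgroup.one_mem _
  obtain ⟨f, hf⟩ := exists_perm5 j.range (by omega) hcore
  have hinj : Function.Injective (f.comp e.toMonoidHom) := hf.comp e.injective
  refine ⟨MulEquiv.ofBijective (f.comp e.toMonoidHom) ?_⟩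
  rw [Nat.bijective_iff_injective_and_card]
  refine ⟨hinj, ?_⟩
  rw [h120, Nat.card_perm, Nat.card_fin]
  rfl

end Small

section C360

variable {G : Type*} [Group G] [Finite G]

lemma small_bot (hO : ∀ g : G, orderOf g ≤ 6) (hc : Nat.card G = 360)
    (hn : Nat.card (Sylow 5 G) = 36) (K : Subgroup G) [K.Normal] (h : Nat.card K ≤ 144) :
    K = ⊥ := by
  apply normal_eq_bot hO (by rw [hc]) (by rw [hc]; norm_num)
  intro h5
  have := normal_large (by rw [hc]) K h5
  omega

lemma core_bot (hO : ∀ g : G, orderOf g ≤ 6) (hc : Nat.card G = 360)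
    (hn : Nat.card (Sylow 5 G) = 36) (H : Subgroup G) (h : Nat.card H ≤ 144) :
    H.normalCore = ⊥ :=
  small_bot hO hc hn _ ((Subgroup.card_le_of_le H.normalCore_le).trans h)

lemma perm_index (H : Subgroup G) (h : H.normalCore = ⊥) :
    ∃ f : G →* Equiv.Perm (Fin H.index), Function.Injective f := by
  have e : G ⧸ H ≃ Fin H.index := Finite.equivFinOfCardEq rfl
  rw [Subgroup.normalCore_eq_ker] at h
  exact ⟨e.permCongrHom.toMonoidHom.comp (MulAction.toPermHom G (G ⧸ H)),
    e.permCongrHom.injective.comp ((MonoidHom.ker_eq_bot_iff _).1 h)⟩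

lemma card_le_sixty (hO : ∀ g : G, orderOf g ≤ 6) (hc : Nat.card G = 360)
    (hn : Nat.card (Sylow 5 G) = 36) (H : Subgroup G) (h : Nat.card H ≤ 144) :
    Nat.card H ≤ 60 := by
  obtain ⟨f, hf⟩ := perm_index H (core_bot hO hc hn H h)
  have h1 := Subgroup.card_dvd_of_injective f hf
  rw [hc, Nat.card_perm, Nat.card_fin] at h1
  have h2 := H.card_mul_index
  rw [hc] at h2
  by_contra h3
  have h4 : H.index ≤ 5 := by
    by_contra h5
    have : 61 * 6 ≤ Nat.card H * H.index := Nat.mul_le_mul (by omega) (by omega)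
    omega
  have h5 := Nat.le_of_dvd (Nat.factorial_pos _) h1
  have h6 := Nat.factorial_le h4
  have h7 : Nat.factorial 5 = 120 := rfl
  omega

lemma card_three (hc : Nat.card G = 360) (P : Sylow 3 G) : Nat.card P = 9 := by
  have : Fact (Nat.Prime 3) := ⟨by norm_num⟩
  simpa using card_sylow_eq (by rw [hc]) 3 2 P (by rw [hc]; norm_num) (by norm_num)

lemma comm_three (hc : Nat.card G = 360) (P : Sylow 3 G) {x y : G} (hx : x ∈ P) (hy : y ∈ P) :
    x * y = y * x := by
  have : Fact (Nat.Prime 3) := ⟨by norm_num⟩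
  have h : Nat.card (P : Subgroup G) = 3 ^ 2 := card_three hc P
  have := IsPGroup.isMulCommutative_of_card_eq_prime_sq h
  exact congrArg Subtype.val (mul_comm' (⟨x, hx⟩ : (P : Subgroup G)) ⟨y, hy⟩)

lemma exp_three (hO : ∀ g : G, orderOf g ≤ 6) (hc : Nat.card G = 360) (P : Sylow 3 G) {x : G}
    (hx : x ∈ P) : x ^ 3 = 1 := by
  have h1 := Subgroup.orderOf_dvd_natCard (P : Subgroup G) hx
  have h2 : Nat.card (P : Subgroup G) = 9 := card_three hc P
  rw [h2] at h1
  have h3 := hO x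
  apply orderOf_dvd_iff_pow_eq_one.1
  generalize orderOf x = n at *
  interval_cases n <;> revert h1 <;> decide

/-- Burnside: a self-centralizing normalizer gives a normal complement. -/
lemma burnside {G : Type*} [Group G] [Finite G] (p : ℕ) [Fact p.Prime] (P : Sylow p G)
    (h : Subgroup.normalizer (P : Set G) ≤ Subgroup.centralizer (P : Set G)) :
    ∃ K : Subgroup G, K.Normal ∧ Nat.card K * Nat.card P = Nat.card G := by
  refine ⟨(MonoidHom.transferSylow P h).ker, inferInstance, ?_⟩
  exact (MonoidHom.ker_transferSylow_isComplement' P h).card_mul_card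

lemma sylow_three (hO : ∀ g : G, orderOf g ≤ 6) (hc : Nat.card G = 360)
    (hn : Nat.card (Sylow 5 G) = 36) : Nat.card (Sylow 3 G) = 10 := by
  have : Fact (Nat.Prime 3) := ⟨by norm_num⟩
  obtain ⟨P⟩ : Nonempty (Sylow 3 G) := inferInstance
  have hP := card_three hc P
  have hm : Nat.card (Sylow 3 G) ≡ 1 [MOD 3] := card_sylow_modEq_one 3 G
  have hi := (P : Subgroup G).card_mul_index
  rw [show Nat.card (P : Subgroup G) = 9 from hP, hc] at hi
  have hd := P.card_dvd_index
  rw [show (P : Subgroup G).index = 40 by omega] at hd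
  have hN := (Subgroup.normalizer (P : Set G)).card_mul_index
  rw [← P.card_eq_index_normalizer, hc] at hN
  have h60 := card_le_sixty hO hc hn (Subgroup.normalizer (P : Set G))
  have h40 : Nat.card (Sylow 3 G) ≠ 40 := by
    intro h
    rw [h] at hN
    have hle : (P : Subgroup G) ≤ Subgroup.normalizer (P : Set G) := Subgroup.le_normalizer
    have heq := Subgroup.eq_of_le_of_card_ge hle (by
      rw [show Nat.card (P : Subgroup G) = 9 from hP]; omega)
    obtain ⟨K, hK, hKc⟩ := burnside 3 P (by
      rw [← heq]
      intro x hx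
      rw [Subgroup.mem_centralizer_iff]
      intro y hy
      exact comm_three hc P hy hx)
    rw [hP, hc] at hKc
    have := small_bot hO hc hn K (by omega)
    rw [this, Subgroup.card_bot] at hKc
    omega
  have h1 : Nat.card (Sylow 3 G) ≠ 1 := by
    intro h
    have : Subsingleton (Sylow 3 G) := (Nat.card_eq_one_iff_unique.1 h).1
    have hPn : (P : Subgroup G).Normal := P.normal_of_subsingleton
    have := small_bot hO hc hn (P : Subgroup G) (by
      rw [show Nat.card (P : Subgroup G) = 9 from hP]; omega)
    rw [this, Subgroup.index_bot] at hi
    omega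
  have hle := Nat.le_of_dvd (by norm_num) hd
  unfold Nat.ModEq at hm
  generalize Nat.card (Sylow 3 G) = n at *
  interval_cases n <;> omega

lemma sylow_card {G : Type*} [Group G] [Finite G] (p n : ℕ) [hp : Fact p.Prime] (P : Sylow p G)
    (h1 : p ^ n ∣ Nat.card G) (h2 : ¬ p ^ (n + 1) ∣ Nat.card G) : Nat.card P = p ^ n := by
  have hne : Nat.card G ≠ 0 := Nat.card_pos.ne'
  rw [Sylow.card_eq_multiplicity]
  congr 1
  have a := (hp.out.pow_dvd_iff_le_factorization hne).1 h1
  rw [hp.out.pow_dvd_iff_le_factorization hne] at h2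
  omega

lemma center36 {C : Type*} [Group C] [Finite C]
    (hc : Nat.card C = 36) (x : C) (hx : orderOf x = 3) (hcomm : ∀ g : C, g * x = x * g)
    (hn3 : Nat.card (Sylow 3 C) ≠ 1) :
    ∃ T : Subgroup C, T.Normal ∧ Nat.card T = 4 := by
  have : Fact (Nat.Prime 2) := ⟨by norm_num⟩
  have : Fact (Nat.Prime 3) := ⟨by norm_num⟩
  obtain ⟨T⟩ : Nonempty (Sylow 2 C) := inferInstance
  have hT : Nat.card (T : Subgroup C) = 2 ^ 2 :=
    sylow_card 2 2 T (by rw [hc]; norm_num) (by rw [hc]; norm_num)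
  have hTc := IsPGroup.isMulCommutative_of_card_eq_prime_sq hT
  set Z := Subgroup.centralizer (T : Set C) with hZ
  set N := Subgroup.normalizer (T : Set C) with hN
  have hTZ : (T : Subgroup C) ≤ Z := by
    intro y hy
    rw [hZ, Subgroup.mem_centralizer_iff]
    intro z hz
    exact congrArg Subtype.val (mul_comm' (⟨z, hz⟩ : (T : Subgroup C)) ⟨y, hy⟩)
  have hxZ : x ∈ Z := by
    rw [hZ, Subgroup.mem_centralizer_iff]
    intro z _
    exact hcomm z
  have hZN : Z ≤ N := Subgroup.centralizer_le_normalizer _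
  have h4 : 4 ∣ Nat.card Z := by
    have := Subgroup.card_dvd_of_le hTZ
    rwa [hT] at this
  have h3 : 3 ∣ Nat.card Z := by
    have := Subgroup.orderOf_dvd_natCard Z hxZ
    rwa [hx] at this
  have h12 : 12 ∣ Nat.card Z := Nat.Coprime.mul_dvd_of_dvd_of_dvd (m := 4) (n := 3)
    (by norm_num) h4 h3
  have hZN' := Subgroup.card_dvd_of_le hZN
  have hNC := N.card_subgroup_dvd_card
  rw [hc] at hNC
  have hZpos : 12 ≤ Nat.card Z := Nat.le_of_dvd Nat.card_pos h12
  by_cases hN36 : Nat.card N = 36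
  · refine ⟨T, ?_, by rw [hT]; norm_num⟩
    have : N = ⊤ := Subgroup.eq_top_of_card_eq N (by rw [hN36, hc])
    exact Subgroup.normalizer_eq_top_iff.1 this
  · exfalso
    have hN12 : Nat.card N = 12 := by
      have h1 := h12.trans hZN'
      have h2 := Nat.le_of_dvd (by norm_num) hNC
      obtain ⟨k, hk⟩ := h1
      have hk3 : k ≤ 3 := by omega
      rw [hk] at hNC hN36 ⊢
      interval_cases k <;> revert hNC hN36 <;> simp
    have hNZ : N ≤ Z := (Subgroup.eq_of_le_of_card_ge hZN (by omega)).ge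
    obtain ⟨K, hK, hKc⟩ := burnside 2 T hNZ
    rw [show Nat.card T = 4 by rw [show Nat.card T = 2 ^ 2 from hT]; norm_num, hc] at hKc
    have hK9 : Nat.card K = 9 := by omega
    have hKp : IsPGroup 3 K := IsPGroup.of_card (n := 2) (by rw [hK9]; norm_num)
    obtain ⟨S, hS⟩ := hKp.exists_le_sylow
    have hSc : Nat.card (S : Subgroup C) = 3 ^ 2 :=
      sylow_card 3 2 S (by rw [hc]; norm_num) (by rw [hc]; norm_num)
    have heq := Subgroup.eq_of_le_of_card_ge hS (by rw [hSc, hK9]; norm_num)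
    have hSn : (S : Subgroup C).Normal := heq ▸ hK
    have := S.unique_of_normal hSn
    exact hn3 Nat.card_unique

lemma normalizer_even {G : Type*} [Group G] [Finite G] (hc : Nat.card G = 360) (T : Subgroup G)
    (hT : Nat.card T = 4) : 8 ∣ Nat.card (Subgroup.normalizer (T : Set G)) := by
  have : Fact (Nat.Prime 2) := ⟨by norm_num⟩
  have hTp : IsPGroup 2 T := IsPGroup.of_card (n := 2) (by rw [hT]; norm_num)
  obtain ⟨S, hS⟩ := hTp.exists_le_sylow
  have hSc : Nat.card (S : Subgroup G) = 2 ^ 3 :=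
    sylow_card 2 3 S (by rw [hc]; norm_num) (by rw [hc]; norm_num)
  have hidx : (T.subgroupOf (S : Subgroup G)).index = 2 := by
    have := (T.subgroupOf (S : Subgroup G)).card_mul_index
    rw [Nat.card_congr (Subgroup.subgroupOfEquivOfLe hS).toEquiv, hT, hSc] at this
    omega
  have hnorm := Subgroup.normal_of_index_eq_two hidx
  have hle : (S : Subgroup G) ≤ Subgroup.normalizer (T : Set G) :=
    (Subgroup.normal_subgroupOf_iff_le_normalizer hS).1 hnorm
  have := Subgroup.card_dvd_of_le hle
  rw [hSc] at this
  exact this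

lemma TI_three (hO : ∀ g : G, orderOf g ≤ 6) (hc : Nat.card G = 360)
    (hn : Nat.card (Sylow 5 G) = 36) (P Q : Sylow 3 G) (x : G) (hxP : x ∈ P) (hxQ : x ∈ Q)
    (hx1 : x ≠ 1) : P = Q := by
  have : Fact (Nat.Prime 2) := ⟨by norm_num⟩
  have : Fact (Nat.Prime 3) := ⟨by norm_num⟩
  have : Fact (Nat.Prime 5) := ⟨by norm_num⟩
  by_contra hPQ
  have hx : orderOf x = 3 := orderOf_eq_prime (exp_three hO hc P hxP) hx1
  set C := Subgroup.centralizer ({x} : Set G) with hC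
  have hmem : ∀ g, g ∈ C ↔ g * x = x * g := by
    intro g
    rw [hC, Subgroup.mem_centralizer_singleton_iff]
  have hPC : (P : Subgroup G) ≤ C := fun y hy => (hmem y).2 (comm_three hc P hy hxP)
  have hQC : (Q : Subgroup G) ≤ C := fun y hy => (hmem y).2 (comm_three hc Q hy hxQ)
  have h9 : 9 ∣ Nat.card C := by
    have := Subgroup.card_dvd_of_le hPC
    rwa [show Nat.card (P : Subgroup G) = 9 from card_three hc P] at this
  have hCd : Nat.card C ∣ 360 := hc ▸ C.card_subgroup_dvd_card
  have h5 : ¬ 5 ∣ Nat.card C := by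
    intro h5
    obtain ⟨y, hy⟩ := exists_prime_orderOf_dvd_card' 5 h5
    have hy' : orderOf (y : G) = 5 := by rwa [Subgroup.orderOf_coe]
    exact hx1 (commute_five hO hy' ((hmem y).1 y.2) (by rw [hx]; norm_num))
  have h72 := dvd72 hCd h5
  have h60 := card_le_sixty hO hc hn C ((Nat.le_of_dvd (by norm_num) h72).trans (by norm_num))
  -- Two different Sylow subgroups of the centralizer
  let P' : Sylow 3 C := P.subtype hPC
  let Q' : Sylow 3 C := Q.subtype hQC
  have hne : P' ≠ Q' := fun h => hPQ (Sylow.subtype_injective h)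
  have hn1 : Nat.card (Sylow 3 C) ≠ 1 := by
    intro h
    have := (Nat.card_eq_one_iff_unique.1 h).1
    exact hne (Subsingleton.elim _ _)
  have hm : Nat.card (Sylow 3 C) ≡ 1 [MOD 3] := card_sylow_modEq_one 3 C
  have hd := P'.card_dvd_index
  have hP'c : Nat.card (P' : Subgroup C) = 9 := by
    have h1 : Nat.card (P' : Subgroup C) = Nat.card (P : Subgroup G) :=
      Nat.card_congr (Subgroup.subgroupOfEquivOfLe hPC).toEquiv
    rw [h1]; exact card_three hc P
  have hi := (P' : Subgroup C).card_mul_index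
  rw [hP'c] at hi
  have hC36 : Nat.card C = 36 := by
    have hipos : 0 < (P' : Subgroup C).index := Nat.pos_of_ne_zero Subgroup.FiniteIndex.index_ne_zero
    have hle := Nat.le_of_dvd hipos hd
    rw [← hi] at h60 h72
    have h8 : (P' : Subgroup C).index ∣ 8 :=
      Nat.dvd_of_mul_dvd_mul_left (k := 9) (by norm_num) h72
    rw [← hi]
    unfold Nat.ModEq at hm
    generalize (P' : Subgroup C).index = i at *
    generalize Nat.card (Sylow 3 C) = n at *
    have : i ≤ 6 := by omega
    interval_cases i <;> interval_cases n <;> omega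
  obtain ⟨T, hTn, hTc⟩ := center36 hC36 ⟨x, (hmem x).2 rfl⟩
    (by rw [← Subgroup.orderOf_coe]; exact hx) (fun g => Subtype.ext ((hmem g).1 g.2)) hn1
  set T' := T.map C.subtype with hT'
  have hT'c : Nat.card T' = 4 := by
    rw [hT', Subgroup.card_map_of_injective C.subtype_injective, hTc]
  have hCN : C ≤ Subgroup.normalizer (T' : Set G) := by
    have hT'C : T' ≤ C := Subgroup.map_subtype_le T
    rw [← Subgroup.normal_subgroupOf_iff_le_normalizer hT'C, hT', Subgroup.subgroupOf,
      Subgroup.comap_map_eq_self_of_injective C.subtype_injective]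
    exact hTn
  have hN36 := Subgroup.card_dvd_of_le hCN
  have hN8 := normalizer_even hc T' hT'c
  have hN := (Subgroup.normalizer (T' : Set G)).card_subgroup_dvd_card
  rw [hc] at hN
  have hN9 : 9 ∣ Nat.card (Subgroup.normalizer (T' : Set G)) :=
    dvd_trans (by rw [hC36]; norm_num) hN36
  have hN72 : 72 ∣ Nat.card (Subgroup.normalizer (T' : Set G)) :=
    Nat.Coprime.mul_dvd_of_dvd_of_dvd (m := 8) (n := 9) (by norm_num) hN8 hN9
  have hN60 := card_le_sixty hO hc hn (Subgroup.normalizer (T' : Set G))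
  have hN360 : Nat.card (Subgroup.normalizer (T' : Set G)) = 360 := by
    obtain ⟨k, hk⟩ := hN72
    rw [hk] at hN hN60 ⊢
    have h5 : k ∣ 5 := Nat.dvd_of_mul_dvd_mul_left (k := 72) (by norm_num) hN
    rcases (Nat.dvd_prime (by norm_num)).1 h5 with h | h <;> subst h
    · omega
    · rfl
  have htop := Subgroup.eq_top_of_card_eq (Subgroup.normalizer (T' : Set G)) (by rw [hN360, hc])
  have hT'n : T'.Normal := Subgroup.normalizer_eq_top_iff.1 htop
  have := small_bot hO hc hn T' (by omega)
  rw [this, Subgroup.card_bot] at hT'c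
  omega

/-- There are no elements of order six. -/
lemma no_six {G : Type*} [Group G] [Fintype G] (hO : ∀ g : G, orderOf g ≤ 6)
    (hc : Nat.card G = 360) (hn : Nat.card (Sylow 5 G) = 36)
    (hsum : 3 * Nat.card G ≤ ∑ g : G, cv (orderOf g)) (g : G) :
    g ^ 3 = 1 ∨ g ^ 4 = 1 ∨ g ^ 5 = 1 := by
  classical
  have : Fact (Nat.Prime 3) := ⟨by norm_num⟩
  have h3 := card_orderOf_eq 3 9 (fun P x hx => exp_three hO hc P hx) (fun P => card_three hc P)
    (TI_three hO hc hn)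
  have h5 := card_order_five (G := G) (by rw [hc]) (by rw [hc]; norm_num)
  rw [sylow_three hO hc hn] at h3
  rw [hn] at h5
  rw [Nat.card_eq_fintype_card, Fintype.card_subtype, Finset.card_filter] at h3 h5
  have key : ∀ y : G, cv (orderOf y) + (if orderOf y = 3 then 1 else 0) +
      2 * (if orderOf y = 5 then 1 else 0) + 3 * (if orderOf y = 6 then 1 else 0) ≤
      4 + 8 * (if y = 1 then 1 else 0) := by
    intro y
    have h1 := hO y
    have h2 : 0 < orderOf y := orderOf_pos y
    have h4 : y = 1 ↔ orderOf y = 1 := orderOf_eq_one_iff.symm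
    simp only [h4]
    generalize orderOf y = n at *
    interval_cases n <;> simp [cv]
  have hs := Finset.sum_le_sum (fun y (_ : y ∈ Finset.univ) => key y)
  simp only [Finset.sum_add_distrib, ← Finset.mul_sum] at hs
  rw [h3, h5] at hs
  have hcard : Fintype.card G = 360 := by rw [← Nat.card_eq_fintype_card, hc]
  simp only [Finset.sum_const, Finset.card_univ, hcard, Finset.sum_ite_eq', Finset.mem_univ,
    if_true, smul_eq_mul] at hs
  rw [hc] at hsum
  have h6 : orderOf g ≠ 6 := by
    intro h6
    have : (if orderOf g = 6 then 1 else 0) ≤ ∑ y : G, (if orderOf y = 6 then 1 else 0) :=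
      Finset.single_le_sum (f := fun y : G => if orderOf y = 6 then 1 else 0)
        (fun _ _ => Nat.zero_le _) (Finset.mem_univ g)
    rw [if_pos h6] at this
    omega
  have h1 := hO g
  have h2 : 0 < orderOf g := orderOf_pos g
  simp only [← orderOf_dvd_iff_pow_eq_one]
  generalize orderOf g = n at *
  interval_cases n <;> omega

end C360

section Final

def tE : Fin 10 → Fin 10 := ![3, 4, 5, 6, 7, 8, 0, 1, 2, 9]
def tF : Fin 10 → Fin 10 := ![1, 2, 0, 4, 5, 3, 7, 8, 6, 9]
def tC : Fin 10 → Fin 10 := ![0, 6, 3, 1, 7, 4, 2, 8, 5, 9]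
def tD : Fin 10 → Fin 10 := ![0, 3, 6, 2, 5, 8, 1, 4, 7, 9]
def tW : Fin 10 → Fin 10 := ![9, 3, 6, 1, 8, 5, 2, 7, 4, 0]

/-- The only possible shape of an element swapping the points `9` and `0`. -/
def tab (S : Fin 10 → Fin 10) (u v : Fin 10) : Fin 10 → Fin 10 :=
  ![9, S u, S (S (S u)), u, v, S (S (S v)), S (S u), S v, S (S v), 0]

/-- The permutation has order 1, 2, 3, 4 or 5. -/
def good (f : Fin 10 → Fin 10) : Prop :=
  (∀ x, f (f (f x)) = x) ∨ (∀ x, f (f (f (f x))) = x) ∨ (∀ x, f (f (f (f (f x)))) = x)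

instance (f : Fin 10 → Fin 10) : Decidable (good f) := by unfold good; infer_instance

lemma search1 : ∀ u v : Fin 10, ¬ ∀ a b : Fin 3, good (fun x => tE^[a] (tF^[b] (tab tC u v x))) := by
  decide +kernel

lemma search2 : ∀ u v : Fin 10, (∀ a b : Fin 3, good (fun x => tE^[a] (tF^[b] (tab tD u v x)))) →
    ∃ k : Fin 4, ∀ x, tab tD u v (tC^[k] x) = tW x := by
  decide +kernel

/-- Adjacency in the Petersen graph. -/
def adj (x y : Fin 10) : Bool :=
  (x, y) ∈ ([(0,1),(0,2),(0,9),(1,5),(1,8),(2,4),(2,7),(3,4),(3,5),(3,9),(4,8),(5,7),(6,7),(6,8),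
    (6,9)] : List (Fin 10 × Fin 10)) ∨
  (y, x) ∈ ([(0,1),(0,2),(0,9),(1,5),(1,8),(2,4),(2,7),(3,4),(3,5),(3,9),(4,8),(5,7),(6,7),(6,8),
    (6,9)] : List (Fin 10 × Fin 10))

lemma adj_E : ∀ x y, adj (tE x) (tE y) = adj x y := by decide +kernel
lemma adj_W : ∀ x y, adj (tW x) (tW y) = adj x y := by decide +kernel
lemma adj_C : ¬ ∀ x y, adj (tC x) (tC y) = adj x y := by decide +kernel
lemma tE3 : ∀ x, tE (tE (tE x)) = x := by decide +kernel
lemma tW2 : ∀ x, tW (tW x) = x := by decide +kernel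
lemma tWE5 : ∀ x, tW (tE (tW (tE (tW (tE (tW (tE (tW (tE x))))))))) = x := by decide +kernel

end Final

section Struct

variable {G : Type*} [Group G] [Finite G]

/-- Bundle of the local facts needed below. -/
structure Good3 (G : Type*) [Group G] [Finite G] : Prop where
  hO : ∀ g : G, orderOf g ≤ 6
  hc : Nat.card G = 360
  hn : Nat.card (Sylow 5 G) = 36
  h6 : ∀ g : G, g ^ 3 = 1 ∨ g ^ 4 = 1 ∨ g ^ 5 = 1

lemma Good3.fix (h : Good3 G) {P Q : Sylow 3 G} (hPQ : P ≠ Q) {p : G} (hp : p ∈ P)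
    (hpQ : p • Q = Q) : p = 1 := by
  have : Fact (Nat.Prime 3) := ⟨by norm_num⟩
  by_contra h1
  apply hPQ
  have hN : p ∈ Subgroup.normalizer (Q : Set G) := Sylow.smul_eq_iff_mem_normalizer.1 hpQ
  have hz : IsPGroup 3 (Subgroup.zpowers p) := by
    apply P.isPGroup'.to_le
    rwa [Subgroup.zpowers_le]
  have := hz.inf_normalizer_sylow Q
  have hpQ' : p ∈ (Q : Subgroup G) := by
    have hm : p ∈ Subgroup.zpowers p ⊓ Subgroup.normalizer (Q : Set G) :=
      ⟨Subgroup.mem_zpowers p, hN⟩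
    rw [this] at hm
    exact hm.2
  exact TI_three h.hO h.hc h.hn P Q p hp hpQ' h1

lemma fixself (P : Sylow 3 G) {p : G} (hp : p ∈ P) : p • P = P :=
  Sylow.smul_eq_iff_mem_normalizer.2 (Subgroup.le_normalizer hp)

lemma Good3.reg (h : Good3 G) {P Q R : Sylow 3 G} (hPQ : P ≠ Q) (hPR : P ≠ R) :
    ∃ p ∈ P, p • Q = R := by
  have : Fact (Nat.Prime 3) := ⟨by norm_num⟩
  classical
  let F : P → {R : Sylow 3 G // R ≠ P} := fun p => ⟨(p : G) • Q, fun hh => hPQ (by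
    have h1 : (p : G) • P = P := fixself P p.2
    exact (MulAction.injective (p : G) (hh.trans h1.symm)).symm)⟩
  have hF : Function.Injective F := by
    intro a b hab
    have h1 : (a : G) • Q = (b : G) • Q := congrArg Subtype.val hab
    have h2 : ((b : G)⁻¹ * a) • Q = Q := by rw [mul_smul, h1, inv_smul_smul]
    have h3 := h.fix hPQ ((P : Subgroup G).mul_mem ((P : Subgroup G).inv_mem b.2) a.2) h2
    exact Subtype.ext (inv_mul_eq_one.1 h3).symm
  have hcard : Nat.card {R : Sylow 3 G // R ≠ P} = 9 := by
    have := Fintype.ofFinite (Sylow 3 G)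
    have h10 := sylow_three h.hO h.hc h.hn
    rw [Nat.card_eq_fintype_card] at h10 ⊢
    have := Fintype.card_subtype_compl (fun q : Sylow 3 G => q = P)
    rw [Fintype.card_subtype_eq, h10] at this
    convert this
  have hb : Function.Bijective F := by
    rw [Nat.bijective_iff_injective_and_card]
    exact ⟨hF, (card_three h.hc P).trans hcard.symm⟩
  obtain ⟨p, hp⟩ := hb.2 ⟨R, hPR.symm⟩
  exact ⟨p, p.2, congrArg Subtype.val hp⟩

lemma conj_mem (P : Sylow 3 G) {d p : G} (hd : d • P = P) (hp : p ∈ P) : d * p * d⁻¹ ∈ P :=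
  (Subgroup.mem_normalizer_iff.1 (Sylow.smul_eq_iff_mem_normalizer.1 hd) p).1 hp

lemma Good3.card_D (h : Good3 G) {P Q : Sylow 3 G} (hPQ : P ≠ Q) :
    Nat.card (MulAction.stabilizer G P ⊓ MulAction.stabilizer G Q : Subgroup G) = 4 := by
  have : Fact (Nat.Prime 3) := ⟨by norm_num⟩
  set D := (MulAction.stabilizer G P ⊓ MulAction.stabilizer G Q : Subgroup G) with hD
  have hN : Nat.card (MulAction.stabilizer G P) = 36 := by
    have h1 := (MulAction.stabilizer G P).card_mul_index
    rw [MulAction.index_stabilizer_of_transitive, sylow_three h.hO h.hc h.hn, h.hc] at h1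
    omega
  let F : P × D → MulAction.stabilizer G P := fun z =>
    ⟨(z.1 : G) * (z.2 : G), by
      have h1 : (z.1 : G) ∈ MulAction.stabilizer G P := fixself P z.1.2
      exact mul_mem h1 z.2.2.1⟩
  have hF : Function.Bijective F := by
    constructor
    · rintro ⟨a, d⟩ ⟨b, d'⟩ hab
      have h1 : (a : G) * d = b * d' := congrArg Subtype.val hab
      have hdQ : (d : G) • Q = Q := d.2.2
      have hdQ' : (d' : G) • Q = Q := d'.2.2
      have h2 : (a : G) • Q = (b : G) • Q := by
        conv_lhs => rw [← hdQ, smul_smul, h1, mul_smul, hdQ']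
      have h2 : ((b : G)⁻¹ * a) • Q = Q := by rw [mul_smul, h2, inv_smul_smul]
      have h3 := h.fix hPQ ((P : Subgroup G).mul_mem ((P : Subgroup G).inv_mem b.2) a.2) h2
      have h4 : (a : G) = b := (inv_mul_eq_one.1 h3).symm
      rw [h4] at h1
      exact Prod.ext (Subtype.ext h4) (Subtype.ext (mul_left_cancel h1))
    · rintro ⟨n, hn⟩
      have hn' : n • P = P := hn
      obtain ⟨p, hp, hpQ⟩ := h.reg hPQ (R := n • Q) (fun hh => hPQ (by
        rw [← hn'] at hh
        have h2 : n • P = n • Q := by rw [hn'] at hh; rw [hn']; exact hh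
        exact MulAction.injective n h2))
      refine ⟨⟨⟨p, hp⟩, ⟨p⁻¹ * n, ?_, ?_⟩⟩, ?_⟩
      · change (p⁻¹ * n) • P = P
        rw [mul_smul, hn', inv_smul_eq_iff, fixself P hp]
      · change (p⁻¹ * n) • Q = Q
        rw [mul_smul, ← hpQ, inv_smul_smul]
      · exact Subtype.ext (mul_inv_cancel_left p n)
  have h1 := Nat.card_congr (Equiv.ofBijective F hF)
  rw [Nat.card_prod, card_three h.hc P, hN] at h1
  omega

lemma Good3.invert (h : Good3 G) {P : Sylow 3 G} {d : G} (hd : d • P = P) (hd1 : d ≠ 1)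
    (hd2 : d ^ 2 = 1) {p : G} (hp : p ∈ P) : d * p * d⁻¹ = p⁻¹ := by
  have hdi : d⁻¹ = d := by rw [inv_eq_iff_mul_eq_one, ← sq, hd2]
  have hq := conj_mem P hd hp
  set q := d * p * d⁻¹ with hqd
  have hcomm := comm_three h.hc P hp hq
  have hdq : d * q * d⁻¹ = p := by
    rw [hqd, hdi]
    have : d * (d * p * d) * d = (d ^ 2) * p * d ^ 2 := by simp only [sq, mul_assoc]
    rw [this, hd2]; group
  obtain ⟨y, hy⟩ : ∃ y, y = p * q := ⟨_, rfl⟩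
  have hyP : y ∈ P := hy ▸ (P : Subgroup G).mul_mem hp hq
  have hy3 : y ^ 3 = 1 := exp_three h.hO h.hc P hyP
  have hdy : Commute d y := by
    have h1 : d * y * d⁻¹ = y := by
      have : d * y * d⁻¹ = (d * p * d⁻¹) * (d * q * d⁻¹) := by rw [hy]; group
      rw [this, hdq, ← hqd, hy, hcomm]
    exact (mul_inv_eq_iff_eq_mul.1 h1)
  suffices hy1 : y = 1 by
    exact (inv_eq_of_mul_eq_one_right (hy ▸ hy1)).symm
  have hd3 : d ^ 3 = d := by rw [pow_succ, hd2, one_mul]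
  have hd4 : d ^ 4 = 1 := by rw [show 4 = 2 * 2 from rfl, pow_mul, hd2, one_pow]
  have hy4 : y ^ 4 = y := by rw [pow_succ, hy3, one_mul]
  rcases h.h6 (d * y) with h6 | h6 | h6 <;> rw [hdy.mul_pow] at h6
  · rw [hd3, hy3, mul_one] at h6
    exact absurd h6 hd1
  · rwa [hd4, hy4, one_mul] at h6
  · have h5 : d ^ 5 = d := by rw [pow_succ, hd4, one_mul]
    have h5' : y ^ 5 = y ^ 2 := by rw [show 5 = 3 + 2 from rfl, pow_add, hy3, one_mul]
    rw [h5, h5'] at h6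
    have h7 : d = y := by
      have : d * y ^ 3 = y := by rw [pow_succ, ← mul_assoc, h6, one_mul]
      rwa [hy3, mul_one] at this
    rw [h7] at hd2
    rw [pow_succ, hd2, one_mul] at hy3
    exact hy3

lemma Good3.exists_c (h : Good3 G) {P Q : Sylow 3 G} (hPQ : P ≠ Q) :
    ∃ c : G, c • P = P ∧ c • Q = Q ∧ c ^ 2 ≠ 1 := by
  by_contra hno
  push Not at hno
  have h4 := h.card_D hPQ
  set D := (MulAction.stabilizer G P ⊓ MulAction.stabilizer G Q : Subgroup G) with hD
  have hsq : ∀ d : D, (d : G) ^ 2 = 1 := fun d => hno d d.2.1 d.2.2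
  have := Fintype.ofFinite D
  classical
  rw [Nat.card_eq_fintype_card] at h4
  have hnt : ∃ a b : D, a ≠ 1 ∧ b ≠ 1 ∧ a ≠ b := by
    have h2 : 2 < Fintype.card D := by omega
    obtain ⟨a, b, c, hab, hac, hbc⟩ := Fintype.two_lt_card_iff.1 h2
    by_cases ha : a = 1
    · exact ⟨b, c, fun hb => hab (ha.trans hb.symm), fun hh => hac (ha.trans hh.symm), hbc⟩
    · by_cases hb : b = 1
      · exact ⟨a, c, ha, fun hh => hbc (hb.trans hh.symm), hac⟩
      · exact ⟨a, b, ha, hb, hab⟩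
  obtain ⟨a, b, ha, hb, hab⟩ := hnt
  have haG : (a : G) ≠ 1 := fun hh => ha (Subtype.ext hh)
  have hbG : (b : G) ≠ 1 := fun hh => hb (Subtype.ext hh)
  have habG : ((a * b : D) : G) ≠ 1 := by
    intro hh
    have h1 : (a : G) * b = 1 := hh
    have h2 := hsq b
    rw [sq] at h2
    exact hab (Subtype.ext (mul_right_cancel (h1.trans h2.symm)))
  have hP1 : ∀ p ∈ P, p = 1 := by
    intro p hp
    have e1 := h.invert (P := P) a.2.1 haG (hsq a) (p := p⁻¹) ((P : Subgroup G).inv_mem hp)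
    have e2 := h.invert (P := P) b.2.1 hbG (hsq b) hp
    have e3 := h.invert (P := P) (a * b).2.1 habG (hsq (a * b)) hp
    have e4 : ((a * b : D) : G) * p * ((a * b : D) : G)⁻¹ = a * (b * p * (b : G)⁻¹) * (a : G)⁻¹ := by
      push_cast; group
    rw [e4, e2, e1, inv_inv] at e3
    have e5 : p ^ 2 = 1 := by rw [sq]; nth_rewrite 1 [e3]; group
    have e6 := exp_three h.hO h.hc P hp
    rwa [pow_succ, e5, one_mul] at e6
  have h9 := card_three h.hc P
  have : Nat.card P = 1 := by
    rw [Nat.card_eq_one_iff_unique]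
    exact ⟨⟨fun x y => Subtype.ext ((hP1 x x.2).trans (hP1 y y.2).symm)⟩, ⟨1⟩⟩
  omega

lemma Good3.mem_D (h : Good3 G) {P Q : Sylow 3 G} (hPQ : P ≠ Q) {c : G} (hcP : c • P = P)
    (hcQ : c • Q = Q) (hc2 : c ^ 2 ≠ 1) : c ^ 4 = 1 ∧ ∀ d : G, d • P = P → d • Q = Q →
    d ^ 2 ≠ 1 → d = c ∨ d = c ^ 3 := by
  have h4 := h.card_D hPQ
  set D := (MulAction.stabilizer G P ⊓ MulAction.stabilizer G Q : Subgroup G) with hD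
  have hcD : c ∈ D := ⟨hcP, hcQ⟩
  have hdvd := Subgroup.orderOf_dvd_natCard D hcD
  rw [h4] at hdvd
  have hc4 : c ^ 4 = 1 := orderOf_dvd_iff_pow_eq_one.1 hdvd
  have hord : orderOf c = 4 := by
    have hnot : ¬ orderOf c ∣ 2 := fun hh => hc2 (orderOf_dvd_iff_pow_eq_one.1 hh)
    have hle := Nat.le_of_dvd (by norm_num) hdvd
    generalize orderOf c = n at *
    interval_cases n <;> omega
  refine ⟨hc4, ?_⟩
  classical
  intro d hdP hdQ hd2
  have hzD : Subgroup.zpowers c = D := by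
    apply Subgroup.eq_of_le_of_card_ge
    · rwa [Subgroup.zpowers_le]
    · rw [h4, Nat.card_zpowers, hord]
  have hdD : d ∈ D := ⟨hdP, hdQ⟩
  rw [← hzD, mem_zpowers_iff_mem_range_orderOf, Finset.mem_image] at hdD
  obtain ⟨k, hk, rfl⟩ := hdD
  rw [Finset.mem_range, hord] at hk
  interval_cases k
  · simp at hd2
  · left; simp
  · rw [← pow_mul] at hd2; exact absurd hc4 hd2
  · right; rfl

lemma Good3.swap (h : Good3 G) {P Q : Sylow 3 G} (hPQ : P ≠ Q) :
    ∃ w : G, w • P = Q ∧ w • Q = P := by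
  have : Fact (Nat.Prime 3) := ⟨by norm_num⟩
  obtain ⟨g, hg⟩ := MulAction.exists_smul_eq G P Q
  have h1 : Q ≠ g • Q := fun hh => hPQ (MulAction.injective g (hg.trans hh))
  obtain ⟨q, hq, hqP⟩ := h.reg h1 hPQ.symm
  exact ⟨q * g, by rw [mul_smul, hg, fixself Q hq], by rw [mul_smul, hqP]⟩

end Struct

section Label

variable {G : Type*} [Group G] [Finite G]

/-- The explicit permutation action on ten points. -/
lemma Good3.action (h : Good3 G) : ∃ (φ : G →* Equiv.Perm (Fin 10)) (e f c w : G),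
    (∀ x, φ e x = tE x) ∧ (∀ x, φ f x = tF x) ∧ (∀ x, φ c x = tC x) ∧
    φ w 9 = 0 ∧ φ w 0 = 9 ∧ (w * c = c * w ∨ w * c = c ^ 3 * w) := by
  have : Fact (Nat.Prime 3) := ⟨by norm_num⟩
  have h10 := sylow_three h.hO h.hc h.hn
  have hnt : Nontrivial (Sylow 3 G) := Finite.one_lt_card_iff_nontrivial.1 (by omega)
  obtain ⟨P, Q, hPQ⟩ := exists_pair_ne (Sylow 3 G)
  obtain ⟨c, hcP, hcQ, hc2⟩ := h.exists_c hPQ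
  obtain ⟨hc4, hcD⟩ := h.mem_D hPQ hcP hcQ hc2
  obtain ⟨w, hwP, hwQ⟩ := h.swap hPQ
  obtain ⟨e, heP, he1⟩ : ∃ e ∈ P, e ≠ 1 := by
    have hnt : Nontrivial P := Finite.one_lt_card_iff_nontrivial.1 (by
      have := card_three h.hc P
      change 1 < Nat.card (P : Subgroup G)
      omega)
    obtain ⟨e, he⟩ := exists_ne (1 : P)
    exact ⟨e, e.2, fun hh => he (Subtype.ext hh)⟩
  obtain ⟨f, hf⟩ : ∃ f, f = c * e * c⁻¹ := ⟨_, rfl⟩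
  have hfP : f ∈ P := hf ▸ conj_mem P hcP heP
  have hcf : c * f * c⁻¹ = e⁻¹ := by
    have h1 := h.invert (P := P) (d := c ^ 2) (by rw [sq, mul_smul, hcP, hcP]) hc2
      (by rw [← pow_mul]; exact hc4) heP
    rw [← h1, hf]; simp only [sq, mul_assoc, mul_inv_rev]
  have he3 := exp_three h.hO h.hc P heP
  have hf3 := exp_three h.hO h.hc P hfP
  have hef : Commute e f := comm_three h.hc P heP hfP
  have hoe : orderOf e = 3 := orderOf_eq_prime he3 he1
  have zP : ∀ a b : ℤ, e ^ a * f ^ b ∈ P := fun a b =>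
    (P : Subgroup G).mul_mem ((P : Subgroup G).zpow_mem heP a) ((P : Subgroup G).zpow_mem hfP b)
  -- conjugation by c
  have hconj : ∀ a b : ℤ, c * (e ^ a * f ^ b) * c⁻¹ = e ^ (-b) * f ^ a := by
    intro a b
    have h1 : c * (e ^ a * f ^ b) * c⁻¹ = (c * e * c⁻¹) ^ a * (c * f * c⁻¹) ^ b := by
      rw [conj_zpow, conj_zpow]; group
    rw [h1, ← hf, hcf, inv_zpow']
    exact (hef.zpow_zpow (-b) a).symm.eq
  have hind : ∀ a b : ℤ, e ^ a * f ^ b = 1 → 3 ∣ a ∧ 3 ∣ b := by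
    intro a b hab
    have h1 : e ^ (-b) * f ^ a = 1 := by rw [← hconj, hab]; group
    have h2 : e ^ (a * a) * f ^ (b * a) = 1 := by
      rw [zpow_mul, zpow_mul, ← (hef.zpow_zpow a b).mul_zpow, hab, one_zpow]
    have h3 : e ^ (-b * b) * f ^ (a * b) = 1 := by
      rw [zpow_mul, zpow_mul, ← (hef.zpow_zpow (-b) a).mul_zpow, h1, one_zpow]
    have h4 : e ^ (a * a + b * b) = 1 := by
      have h5 : e ^ (a * a) = e ^ (-b * b) := by
        rw [mul_comm a b] at h3
        exact mul_right_cancel (h2.trans h3.symm)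
      rw [zpow_add, h5, ← zpow_add, show -b * b + b * b = 0 by ring, zpow_zero]
    have h5 := orderOf_dvd_iff_zpow_eq_one.2 h4
    rw [hoe] at h5
    push_cast at h5
    rw [Int.dvd_iff_emod_eq_zero, Int.dvd_iff_emod_eq_zero]
    rw [Int.dvd_iff_emod_eq_zero, Int.add_emod, Int.mul_emod, Int.mul_emod b] at h5
    have ha := Int.emod_nonneg a (by norm_num : (3 : ℤ) ≠ 0)
    have hb := Int.emod_nonneg b (by norm_num : (3 : ℤ) ≠ 0)
    have ha' := Int.emod_lt_of_pos a (by norm_num : (0 : ℤ) < 3)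
    have hb' := Int.emod_lt_of_pos b (by norm_num : (0 : ℤ) < 3)
    generalize a % 3 = m at *
    generalize b % 3 = n at *
    interval_cases m <;> interval_cases n <;> simp_all
  let L : ℤ → ℤ → Sylow 3 G := fun a b => (e ^ a * f ^ b) • Q
  have Linj : ∀ a b a' b', L a b = L a' b' → 3 ∣ a - a' ∧ 3 ∣ b - b' := by
    intro a b a' b' hh
    apply hind
    have h1 : ((e ^ a' * f ^ b')⁻¹ * (e ^ a * f ^ b)) • Q = Q := by
      rw [mul_smul, inv_smul_eq_iff]; exact hh
    have h2 := h.fix hPQ ((P : Subgroup G).mul_mem ((P : Subgroup G).inv_mem (zP a' b')) (zP a b)) h1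
    have h3 := inv_mul_eq_one.1 h2
    rw [zpow_sub, zpow_sub]
    have h4 : e ^ a * (e ^ a')⁻¹ * (f ^ b * (f ^ b')⁻¹) =
        (e ^ a * f ^ b) * (e ^ a' * f ^ b')⁻¹ := by
      have := (hef.zpow_zpow a' b).inv_left.eq
      rw [mul_inv_rev, mul_assoc, ← mul_assoc _ (f ^ b), this]
      have h6 := ((hef.zpow_zpow a' b').inv_left.inv_right).eq
      rw [mul_assoc (f ^ b), h6]
      group
    rw [h4, h3, mul_inv_cancel]
  have LP : ∀ a b, L a b ≠ P := by
    intro a b hh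
    have h1 := fixself P (zP a b)
    exact hPQ (MulAction.injective _ (h1.trans hh.symm))
  have Lmod : ∀ a b a' b' : ℤ, 3 ∣ a - a' → 3 ∣ b - b' → L a b = L a' b' := by
    rintro a b a' b' ⟨k, hk⟩ ⟨l, hl⟩
    have h1 : e ^ a = e ^ a' := by
      rw [show a = 3 * k + a' by omega, zpow_add, zpow_mul]
      have : e ^ (3 : ℤ) = 1 := by exact_mod_cast he3
      rw [this, one_zpow, one_mul]
    have h2 : f ^ b = f ^ b' := by
      rw [show b = 3 * l + b' by omega, zpow_add, zpow_mul]
      have : f ^ (3 : ℤ) = 1 := by exact_mod_cast hf3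
      rw [this, one_zpow, one_mul]
    change (e ^ a * f ^ b) • Q = (e ^ a' * f ^ b') • Q
    rw [h1, h2]
  have Le : ∀ a b, e • L a b = L (a + 1) b := by
    intro a b
    change e • (e ^ a * f ^ b) • Q = (e ^ (a + 1) * f ^ b) • Q
    rw [smul_smul, ← mul_assoc, zpow_add_one, ((Commute.refl e).zpow_right a).eq]
  have Lf : ∀ a b, f • L a b = L a (b + 1) := by
    intro a b
    change f • (e ^ a * f ^ b) • Q = (e ^ a * f ^ (b + 1)) • Q
    rw [smul_smul, ← mul_assoc, ← (hef.zpow_left a).eq, mul_assoc, zpow_add_one,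
      ((Commute.refl f).zpow_right b).eq]
  have Lc : ∀ a b, c • L a b = L (-b) a := by
    intro a b
    change c • (e ^ a * f ^ b) • Q = (e ^ (-b) * f ^ a) • Q
    rw [← hconj, mul_smul (c * (e ^ a * f ^ b)), inv_smul_eq_iff.2 hcQ.symm, mul_smul c]
  let A : Fin 10 → ℤ := ![0, 0, 0, 1, 1, 1, 2, 2, 2, 0]
  let B : Fin 10 → ℤ := ![0, 1, 2, 0, 1, 2, 0, 1, 2, 0]
  let l : Fin 10 → Sylow 3 G := fun k => if k = 9 then P else L (A k) (B k)
  have hAB : ∀ x y : Fin 10, x ≠ 9 → y ≠ 9 → 3 ∣ A x - A y → 3 ∣ B x - B y → x = y := by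
    decide
  have linj : Function.Injective l := by
    intro x y hxy
    by_cases hx : x = 9 <;> by_cases hy : y = 9
    · rw [hx, hy]
    · simp only [l, if_pos hx, if_neg hy] at hxy
      exact absurd hxy.symm (LP _ _)
    · simp only [l, if_neg hx, if_pos hy] at hxy
      exact absurd hxy (LP _ _)
    · simp only [l, if_neg hx, if_neg hy] at hxy
      obtain ⟨h1, h2⟩ := Linj _ _ _ _ hxy
      exact hAB x y hx hy h1 h2
  have lbij : Function.Bijective l := by
    rw [Nat.bijective_iff_injective_and_card]
    exact ⟨linj, by rw [h10]; simp⟩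
  let ℓ : Fin 10 ≃ Sylow 3 G := Equiv.ofBijective l lbij
  let φ : G →* Equiv.Perm (Fin 10) :=
    ℓ.symm.permCongrHom.toMonoidHom.comp (MulAction.toPermHom G (Sylow 3 G))
  have hφ : ∀ (g : G) (x y : Fin 10), g • l x = l y → φ g x = y := by
    intro g x y hh
    change ℓ.symm (g • ℓ x) = y
    rw [Equiv.symm_apply_eq]
    exact hh
  have hl9 : l 9 = P := if_pos rfl
  have hl0 : l 0 = Q := by
    change (e ^ (0 : ℤ) * f ^ (0 : ℤ)) • Q = Q
    simp
  have hlx : ∀ x, x ≠ 9 → l x = L (A x) (B x) := fun x hx => if_neg hx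
  have tabE : ∀ x : Fin 10, x ≠ 9 → tE x ≠ 9 ∧ 3 ∣ A x + 1 - A (tE x) ∧ 3 ∣ B x - B (tE x) := by
    decide
  have tabF : ∀ x : Fin 10, x ≠ 9 → tF x ≠ 9 ∧ 3 ∣ A x - A (tF x) ∧ 3 ∣ B x + 1 - B (tF x) := by
    decide
  have tabC : ∀ x : Fin 10, x ≠ 9 → tC x ≠ 9 ∧ 3 ∣ - B x - A (tC x) ∧ 3 ∣ A x - B (tC x) := by
    decide
  refine ⟨φ, e, f, c, w, ?_, ?_, ?_, ?_, ?_, ?_⟩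
  · intro x
    apply hφ
    by_cases hx : x = 9
    · rw [hx, hl9, fixself P heP, ← hl9]; rfl
    · obtain ⟨h1, h2, h3⟩ := tabE x hx
      rw [hlx x hx, hlx _ h1, Le]
      exact Lmod _ _ _ _ h2 h3
  · intro x
    apply hφ
    by_cases hx : x = 9
    · rw [hx, hl9, fixself P hfP, ← hl9]; rfl
    · obtain ⟨h1, h2, h3⟩ := tabF x hx
      rw [hlx x hx, hlx _ h1, Lf]
      exact Lmod _ _ _ _ h2 h3
  · intro x
    apply hφ
    by_cases hx : x = 9
    · rw [hx, hl9, hcP, ← hl9]; rfl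
    · obtain ⟨h1, h2, h3⟩ := tabC x hx
      rw [hlx x hx, hlx _ h1, Lc]
      exact Lmod _ _ _ _ h2 h3
  · apply hφ; rw [hl9, hl0, hwP]
  · apply hφ; rw [hl9, hl0, hwQ]
  · have hP' : (w * c * w⁻¹) • P = P := by
      rw [mul_smul, mul_smul, inv_smul_eq_iff.2 hwQ.symm, hcQ, hwQ]
    have hQ' : (w * c * w⁻¹) • Q = Q := by
      rw [mul_smul, mul_smul, inv_smul_eq_iff.2 hwP.symm, hcP, hwP]
    have h2 : (w * c * w⁻¹) ^ 2 ≠ 1 := by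
      rw [conj_pow]
      intro hh
      apply hc2
      have := mul_inv_eq_one.1 hh
      exact mul_eq_left.1 this
    rcases hcD _ hP' hQ' h2 with hh | hh
    · left; exact mul_inv_eq_iff_eq_mul.1 hh
    · right; exact mul_inv_eq_iff_eq_mul.1 hh

/-- The swapping element can be normalized. -/
lemma Good3.action2 (h : Good3 G) : ∃ (φ : G →* Equiv.Perm (Fin 10)) (e c w : G),
    (∀ x, φ e x = tE x) ∧ (∀ x, φ c x = tC x) ∧ (∀ x, φ w x = tW x) := by
  obtain ⟨φ, e, f, c, w, he, hf, hc, h9, h0, hw⟩ := h.action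
  have hgood : ∀ g : G, good (φ g) := by
    intro g
    rcases h.h6 g with h1 | h1 | h1
    · left; intro x
      have : φ (g ^ 3) x = x := by rw [h1, map_one]; rfl
      rw [map_pow] at this; exact this
    · right; left; intro x
      have : φ (g ^ 4) x = x := by rw [h1, map_one]; rfl
      rw [map_pow] at this; exact this
    · right; right; intro x
      have : φ (g ^ 5) x = x := by rw [h1, map_one]; rfl
      rw [map_pow] at this; exact this
  have hpow : ∀ (g : G) (t : Fin 10 → Fin 10), (∀ x, φ g x = t x) → ∀ (k : ℕ) x,
      φ (g ^ k) x = t^[k] x := by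
    intro g t hg k
    induction k with
    | zero => intro x; simp
    | succ k ih =>
      intro x
      rw [pow_succ, map_mul, Equiv.Perm.mul_apply, hg, ih, Function.iterate_succ_apply]
  have htab : ∀ S : Fin 10 → Fin 10, (∀ x, φ w (tC x) = S (φ w x)) →
      (φ w : Fin 10 → Fin 10) = tab S (φ w 3) (φ w 4) := by
    intro S hS
    have e1 : φ w 1 = S (φ w 3) := hS 3
    have e6 : φ w 6 = S (φ w 1) := hS 1
    have e2 : φ w 2 = S (φ w 6) := hS 6
    have e7 : φ w 7 = S (φ w 4) := hS 4
    have e8 : φ w 8 = S (φ w 7) := hS 7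
    have e5 : φ w 5 = S (φ w 8) := hS 8
    rw [e1] at e6; rw [e6] at e2; rw [e7] at e8; rw [e8] at e5
    funext x
    fin_cases x
    · exact h0
    · exact e1
    · exact e2
    · rfl
    · rfl
    · exact e5
    · exact e6
    · exact e7
    · exact e8
    · exact h9
  have hall : ∀ a b : Fin 3, good (fun x => tE^[a] (tF^[b] (φ w x))) := by
    intro a b
    have h1 := hgood (e ^ (a : ℕ) * (f ^ (b : ℕ) * w))
    convert h1 using 2 with x
    rw [map_mul, map_mul, Equiv.Perm.mul_apply, Equiv.Perm.mul_apply, hpow e tE he, hpow f tF hf]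
  rcases hw with hw | hw
  · exfalso
    have h1 := htab tC (fun x => by
      have h2 := congrArg (fun g => φ g x) hw
      simp only [map_mul, Equiv.Perm.mul_apply, hc] at h2
      exact h2)
    rw [h1] at hall
    exact search1 _ _ hall
  · have hD : ∀ x, φ (c ^ 3) x = tD x := by
      intro x
      rw [hpow c tC hc]
      revert x; decide
    have h1 := htab tD (fun x => by
      have h2 := congrArg (fun g => φ g x) hw
      simp only [map_mul, Equiv.Perm.mul_apply, hc] at h2
      rw [h2, hD])
    have hall' := hall
    rw [h1] at hall'
    obtain ⟨k, hk⟩ := search2 _ _ hall'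
    refine ⟨φ, e, c, w * c ^ (k : ℕ), he, hc, ?_⟩
    intro x
    rw [map_mul, Equiv.Perm.mul_apply, hpow c tC hc, ← hk, ← h1]

lemma case360 {G : Type*} [Group G] [Fintype G] (hO : ∀ g : G, orderOf g ≤ 6)
    (hc : Nat.card G = 360) (hn : Nat.card (Sylow 5 G) = 36)
    (hsum : 3 * Nat.card G ≤ ∑ g : G, cv (orderOf g)) :
    Nonempty (G ≃* alternatingGroup (Fin 6)) := by
  have : Fact (Nat.Prime 2) := ⟨by norm_num⟩
  have : Fact (Nat.Prime 3) := ⟨by norm_num⟩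
  have : Fact (Nat.Prime 5) := ⟨by norm_num⟩
  obtain ⟨φ, e, c, w, hE, hC, hW⟩ := Good3.action2 ⟨hO, hc, hn, no_six hO hc hn hsum⟩
  let H : Subgroup G :=
    { carrier := {g | ∀ x y, adj (φ g x) (φ g y) = adj x y}
      one_mem' := by intro x y; simp
      mul_mem' := by
        intro a b ha hb x y
        rw [map_mul, Equiv.Perm.mul_apply, Equiv.Perm.mul_apply, ha, hb]
      inv_mem' := by
        intro a ha x y
        rw [← ha, ← Equiv.Perm.mul_apply, ← Equiv.Perm.mul_apply, ← map_mul, mul_inv_cancel]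
        simp }
  have heH : e ∈ H := fun x y => by rw [hE, hE, adj_E]
  have hwH : w ∈ H := fun x y => by rw [hW, hW, adj_W]
  have hcH : c ∉ H := fun hh => adj_C (fun x y => by rw [← hC, ← hC]; exact hh x y)
  have hdiv : ∀ (p : ℕ) (hp : p.Prime) (g : G), g ∈ H → φ g ^ p = 1 → φ g ≠ 1 →
      p ∣ Nat.card H := by
    intro p hp g hg h1 h2
    have := Fact.mk hp
    have h3 : orderOf (φ g) = p := orderOf_eq_prime h1 h2
    rw [← h3]
    exact (orderOf_map_dvd φ g).trans (Subgroup.orderOf_dvd_natCard H hg)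
  have h2 : 2 ∣ Nat.card H := hdiv 2 (by norm_num) w hwH (by
      ext1 x
      change φ w (φ w x) = x
      rw [hW, hW, tW2]) (fun hh => by
      have h1 := hW 0
      rw [hh] at h1
      revert h1; decide)
  have h3 : 3 ∣ Nat.card H := hdiv 3 (by norm_num) e heH (by
      ext1 x
      change φ e (φ e (φ e x)) = x
      rw [hE, hE, hE, tE3]) (fun hh => by
      have h1 := hE 0
      rw [hh] at h1
      revert h1; decide)
  have h5 : 5 ∣ Nat.card H := hdiv 5 (by norm_num) (w * e) (mul_mem hwH heH) (by
      ext1 x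
      rw [map_mul]
      change φ w (φ e (φ w (φ e (φ w (φ e (φ w (φ e (φ w (φ e x))))))))) = x
      simp only [hW, hE]
      exact tWE5 x) (fun hh => by
      have h1 : φ (w * e) 0 = tW (tE 0) := by
        rw [map_mul, Equiv.Perm.mul_apply, hE, hW]
      rw [hh] at h1
      revert h1; decide)
  have hHO : ∀ g : H, orderOf g ≤ 6 := fun g => by
    have := hO g
    rwa [Subgroup.orderOf_coe] at this
  have hHd : Nat.card H ∣ 360 := hc ▸ H.card_subgroup_dvd_card
  obtain ⟨S⟩ : Nonempty (Sylow 5 H) := inferInstance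
  have hle : Nat.card H ≤ 144 := by
    rcases order_cases hHO hHd h5 S with hh | hh | hh
    · have := Nat.le_of_dvd (by norm_num) hh.2
      omega
    · omega
    · exfalso
      have : H = ⊤ := Subgroup.eq_top_of_card_eq H (by rw [hh.2, hc])
      exact hcH (this ▸ Subgroup.mem_top c)
  have h60 := card_le_sixty hO hc hn H hle
  have hH60 : Nat.card H = 60 := by
    rcases order_cases hHO hHd h5 S with hh | hh | hh
    · have := h3.trans hh.2
      omega
    · omega
    · omega
  have hperm := perm_index H (core_bot hO hc hn H hle)
  have hidx : H.index = 6 := by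
    have := H.card_mul_index
    rw [hH60, hc] at this
    omega
  rw [hidx] at hperm
  obtain ⟨ψ, hψ⟩ := hperm
  exact iso_alternating 6 ψ hψ (by rw [hc]; rfl)

end Label

end SmallMathieu

/-- A non-solvable finite group satisfying Condition (4) is isomorphic to `A₅`, `S₅` or `A₆`. -/
theorem nonsolvable_of_condition4 (G : Type*) [Group G] [Fintype G] (h : Condition4 G)
    (hns : ¬ IsSolvable G) :
    Nonempty (G ≃* alternatingGroup (Fin 5)) ∨
      Nonempty (G ≃* Equiv.Perm (Fin 5)) ∨
        Nonempty (G ≃* alternatingGroup (Fin 6)) := by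
  obtain ⟨hO, hc, hsum⟩ := SmallMathieu.numerics G h
  obtain ⟨-, ⟨hn, h60 | h120⟩ | ⟨hn, h360⟩⟩ := SmallMathieu.nonsolv_cases hO hc hns
  · exact Or.inl (SmallMathieu.case60 hO h60 hn)
  · exact Or.inr (Or.inl (SmallMathieu.case120 hO h120 hn))
  · exact Or.inr (Or.inr (SmallMathieu.case360 hO h360 hn hsum))
end

section
/- Let G be a nilpotent finite group satisfying Condition (4). Then G is trivial or isomorphic to one of the following groups: C₂, C₃, C₄, C₅, C₆, C₂×C₂, C₃×C₃, C₂×C₂×C₂, C₂×C₄, or the dihedral group D₈ of order 8. -/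
/-- The twisted averaging formula. -/
theorem twisted_average {H : Type*} [Group H] [Fintype H] {V : Type} [AddCommGroup V]
    [Module ℂ V] [FiniteDimensional ℂ V] (ρ : Representation ℂ H V) :
    ∑ h, LinearMap.trace ℂ V (ρ h)
      = (Fintype.card H : ℂ) * (Module.finrank ℂ ρ.invariants : ℂ) := by
  have hc : (Fintype.card H : ℂ) ≠ 0 := by simp
  let : Invertible (Fintype.card H : ℂ) := invertibleOfNonzero hc
  have h1 := (ρ.isProj_averageMap).trace
  rw [← h1]
  simp [GroupAlgebra.average, map_sum, hc]

/-- Twist of a representation by a one-dimensional character. -/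
def twistRep {H : Type*} [Group H] {V : Type} [AddCommGroup V]
    [Module ℂ V] (ψ : H →* ℂ) (ρ : Representation ℂ H V) : Representation ℂ H V where
  toFun h := ψ h • ρ h
  map_one' := by simp
  map_mul' a b := by
    ext v
    simp [smul_smul, mul_comm (ψ a)]

theorem mathieu_sum_twist {G H : Type*} [Group G] [Group H] [Fintype H]
    (hG : HasSmallMathieuRep3 G) (f : H →* G) (hf : Function.Injective f) (ψ : H →* ℂ) :
    ∃ n : ℕ, ∑ h, ψ h * mathieuCharValue (orderOf h) = (Fintype.card H : ℂ) * n := by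
  obtain ⟨V, _, _, ρ, ⟨hd, -, htr⟩, -⟩ := hG
  have : FiniteDimensional ℂ V := Module.finite_of_finrank_pos (by omega)
  refine ⟨_, Eq.trans ?_ (twisted_average (twistRep ψ (ρ.comp f)))⟩
  refine Finset.sum_congr rfl fun h _ => ?_
  have : twistRep ψ (ρ.comp f) h = ψ h • ρ (f h) := rfl
  rw [this, map_smul, htr, orderOf_injective f hf, smul_eq_mul]

theorem mathieu_sum {G H : Type*} [Group G] [Group H] [Fintype H]
    (hG : HasSmallMathieuRep3 G) (f : H →* G) (hf : Function.Injective f) :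
    ∃ n : ℕ, 3 ≤ n ∧ ∑ h : H, mathieuCharValue (orderOf h) = (Fintype.card H : ℂ) * n := by
  obtain ⟨V, _, _, ρ, ⟨hd, -, htr⟩, h3⟩ := hG
  have : FiniteDimensional ℂ V := Module.finite_of_finrank_pos (by omega)
  refine ⟨Module.finrank ℂ (Representation.invariants (ρ.comp f)), ?_,
    Eq.trans ?_ (twisted_average (ρ.comp f))⟩
  · refine h3.trans (Submodule.finrank_mono ?_)
    intro v hv h
    exact hv (f h)
  · refine Finset.sum_congr rfl fun h _ => ?_
    have : (ρ.comp f) h = ρ (f h) := rfl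
    rw [this, htr, orderOf_injective f hf]

theorem mathieu_sum_const {G : Type*} [Group G] [Finite G]
    (hG : HasSmallMathieuRep3 G) (H : Subgroup G) (c : ℕ)
    (hc : ∀ g ∈ H, g ≠ 1 → mathieuCharValue (orderOf g) = c) :
    ∃ n : ℕ, 3 ≤ n ∧ 12 + (Nat.card H - 1) * c = Nat.card H * n := by
  classical
  let := Fintype.ofFinite H
  obtain ⟨n, hn, hs⟩ := mathieu_sum hG H.subtype H.subtype_injective
  refine ⟨n, hn, ?_⟩
  rw [← Finset.add_sum_erase _ _ (Finset.mem_univ (1 : H)),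
    Finset.sum_congr rfl (g := fun _ => (c : ℂ))] at hs
  · simp only [orderOf_one, Finset.sum_const, Finset.card_erase_of_mem (Finset.mem_univ (1 : H)),
      Finset.card_univ, nsmul_eq_mul] at hs
    rw [Nat.card_eq_fintype_card]
    have : mathieuCharValue 1 = ((12 : ℕ) : ℂ) := by simp [mathieuCharValue]
    rw [this] at hs
    exact_mod_cast hs
  · intro x hx
    rw [← hc x x.2 (by simpa using (Finset.ne_of_mem_erase hx))]
    simp

theorem mathieu_order {G : Type*} [Group G] (hG : HasSmallMathieuRep3 G) (g : G) :
    orderOf g = 1 ∨ orderOf g = 2 ∨ orderOf g = 3 ∨ orderOf g = 4 ∨ orderOf g = 5 ∨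
    orderOf g = 6 ∨ orderOf g = 8 ∨ orderOf g = 11 := by
  obtain ⟨V, _, _, ρ, ⟨-, h, -⟩, -⟩ := hG
  simpa using h g

/-- Exclusion of a prime power in the group order. -/
theorem mathieu_not_dvd {G : Type*} [Group G] [Finite G]
    (hG : HasSmallMathieuRep3 G) (p k c : ℕ) [Fact p.Prime]
    (hc : ∀ g : G, orderOf g ∣ p ^ k → g ≠ 1 → mathieuCharValue (orderOf g) = c)
    (hn : ∀ n, 3 ≤ n → 12 + (p ^ k - 1) * c ≠ p ^ k * n) : ¬ p ^ k ∣ Nat.card G := by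
  intro hd
  obtain ⟨H, hH⟩ := Sylow.exists_subgroup_card_pow_prime p hd
  obtain ⟨n, h3, h⟩ := mathieu_sum_const hG H c (fun g hg h1 => hc g (by
    rw [← hH]; exact H.orderOf_dvd_natCard hg) h1)
  rw [hH] at h
  exact hn n h3 h

theorem mathieu_two_three {G A B : Type*} [Group G] [Group A] [Group B] [Fintype A] [Fintype B]
    (hG : HasSmallMathieuRep3 G) (f : A × B →* G) (hf : Function.Injective f)
    (hA : ∀ a : A, a ≠ 1 → orderOf a = 2) (hB : ∀ b : B, b ≠ 1 → orderOf b = 3) (ψ : B →* ℂ) :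
    ∃ n : ℕ, ((Fintype.card A : ℂ) + 2) * (3 + ∑ b, ψ b)
      = (Fintype.card A : ℂ) * (Fintype.card B : ℂ) * n := by
  classical
  obtain ⟨n, h⟩ := mathieu_sum_twist hG f hf (ψ.comp (MonoidHom.snd A B))
  refine ⟨n, ?_⟩
  rw [Fintype.card_prod, Nat.cast_mul] at h
  rw [← h, Fintype.sum_prod_type]
  have key : ∀ (a : A) (b : B), (ψ.comp (MonoidHom.snd A B)) (a, b) *
      mathieuCharValue (orderOf (a, b)) =
      (1 + (if a = 1 then 2 else 0)) * (ψ b + (if b = 1 then 3 else 0)) := by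
    intro a b
    rw [Prod.orderOf_mk]
    by_cases ha : a = 1 <;> by_cases hb : b = 1
    · subst ha hb; simp [mathieuCharValue]; norm_num
    · subst ha; simp [hb, hB b hb, mathieuCharValue]; ring
    · subst hb; simp [ha, hA a ha, mathieuCharValue]; norm_num
    · have h6 : Nat.lcm 2 3 = 6 := rfl
      simp [ha, hb, hA a ha, hB b hb, h6, mathieuCharValue]
  simp_rw [key, ← Finset.mul_sum, ← Finset.sum_mul, Finset.sum_add_distrib]
  simp
  left
  ring

theorem nilp_commute {G : Type*} [Group G] [Finite G] (hnil : Group.IsNilpotent G) {p q i j : ℕ}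
    [hp : Fact p.Prime] [hq : Fact q.Prime] (hpq : p ≠ q) {x y : G} (hx : orderOf x ∣ p ^ i)
    (hy : orderOf y ∣ q ^ j) : Commute x y := by
  have hN := Group.isNilpotent_of_finite_tfae.out 0 3 rfl rfl |>.mp hnil
  have aux : ∀ (p i : ℕ) [Fact p.Prime] (x : G), orderOf x ∣ p ^ i → ∃ P : Sylow p G, x ∈ P := by
    intro p i _ x hx
    have : IsPGroup p (Subgroup.zpowers x) := by
      obtain ⟨m, -, hm⟩ := (Nat.dvd_prime_pow Fact.out).1 hx
      apply IsPGroup.of_card (n := m)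
      rw [Nat.card_zpowers, hm]
    obtain ⟨P, hP⟩ := this.exists_le_sylow
    exact ⟨P, hP (Subgroup.mem_zpowers x)⟩
  obtain ⟨P, hP⟩ := aux p i x hx
  obtain ⟨Q, hQ⟩ := aux q j y hy
  exact Subgroup.commute_of_normal_of_disjoint _ _ (hN p hp P) (hN q hq Q)
    (IsPGroup.disjoint_of_ne p q hpq _ _ P.2 Q.2) x y hP hQ

theorem nilp_prod {G : Type*} [Group G] [Finite G] (hnil : Group.IsNilpotent G) {p q i j : ℕ}
    [hp : Fact p.Prime] [hq : Fact q.Prime] (hpq : p ≠ q) (A B : Subgroup G)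
    (hA : Nat.card A = p ^ i) (hB : Nat.card B = q ^ j) :
    ∃ f : A × B →* G, Function.Injective f := by
  have hc : ∀ (a : A) (b : B), Commute (A.subtype a) (B.subtype b) := fun a b =>
    nilp_commute hnil hpq (i := i) (j := j) (hA ▸ A.orderOf_dvd_natCard a.2)
      (hB ▸ B.orderOf_dvd_natCard b.2)
  refine ⟨MonoidHom.noncommCoprod A.subtype B.subtype hc, ?_⟩
  rw [MonoidHom.noncommCoprod_injective]
  refine ⟨A.subtype_injective, B.subtype_injective, ?_⟩
  rw [A.range_subtype, B.range_subtype]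
  exact IsPGroup.disjoint_of_ne p q hpq _ _ (IsPGroup.of_card hA) (IsPGroup.of_card hB)

theorem perm6_order (σ : Equiv.Perm (Fin 6)) : orderOf σ ≠ 8 := by
  intro h
  have : σ.cycleType.lcm ∣ 60 := by
    rw [Multiset.lcm_dvd]
    intro n hn
    have h1 := Equiv.Perm.le_card_support_of_mem_cycleType hn
    have h2 := Equiv.Perm.two_le_of_mem_cycleType hn
    have h3 : σ.support.card ≤ 6 := by simpa using Finset.card_le_univ σ.support
    have h4 : n ≤ 6 := h1.trans h3
    interval_cases n <;> norm_num
  rw [Equiv.Perm.lcm_cycleType, h] at this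
  norm_num at this

theorem elem_abelian_aux (p k : ℕ) [Fact p.Prime] (A : Type*) [AddCommGroup A] [Finite A]
    [Module (ZMod p) A]
    (M : Type) [AddCommGroup M] [Module (ZMod p) M] [Module.Finite (ZMod p) M]
    (hM : Module.finrank (ZMod p) M = k) (hcard : Nat.card A = p ^ k) :
    Nonempty (A ≃+ M) := by
  have h1 := Module.natCard_eq_pow_finrank (K := ZMod p) (V := A)
  rw [Nat.card_zmod, hcard] at h1
  have h3 : k = Module.finrank (ZMod p) A :=
    Nat.pow_right_injective (Fact.out : p.Prime).two_le h1
  exact ⟨(LinearEquiv.ofFinrankEq A M (by rw [← h3, hM]) : A ≃ₗ[ZMod p] M).toAddEquiv⟩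

theorem elem_abelian {G : Type*} [Group G] [Finite G] (p k : ℕ) [Fact p.Prime]
    (M : Type) [AddCommGroup M] [Module (ZMod p) M] [Module.Finite (ZMod p) M]
    (hM : Module.finrank (ZMod p) M = k) (hcomm : ∀ a b : G, a * b = b * a)
    (hexp : ∀ a : G, a ^ p = 1) (hcard : Nat.card G = p ^ k) :
    Nonempty (G ≃* Multiplicative M) := by
  let _ : CommGroup G := { (inferInstance : Group G) with mul_comm := hcomm }
  let _ : Module (ZMod p) (Additive G) := AddCommGroup.zmodModule (n := p) (fun x => by
    exact congrArg Additive.ofMul (hexp x.toMul))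
  have : Finite (Additive G) := ‹Finite G›
  obtain ⟨e⟩ := elem_abelian_aux p k (Additive G) M hM hcard
  exact ⟨AddEquiv.toMultiplicativeRight e⟩

theorem comm_of_exp_two {G : Type*} [Group G] (h : ∀ a : G, a ^ 2 = 1) (a b : G) :
    a * b = b * a := by
  have h1 := h (a * b)
  have ha : a⁻¹ = a := inv_eq_of_mul_eq_one_left (by rw [← sq, h])
  have hb : b⁻¹ = b := inv_eq_of_mul_eq_one_left (by rw [← sq, h])
  have hab : (a * b)⁻¹ = a * b := inv_eq_of_mul_eq_one_left (by rw [← sq, h])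
  rw [← hab, mul_inv_rev, ha, hb]

theorem cyclic_equiv {G : Type*} [Group G] [Finite G] (n : ℕ) (x : G) (hx : orderOf x = n)
    (hc : Nat.card G = n) : Nonempty (G ≃* Multiplicative (ZMod n)) := by
  have : IsCyclic G := isCyclic_of_orderOf_eq_card x (by rw [hx, hc])
  exact ⟨mulEquivOfCyclicCardEq (by rw [hc]; exact (Nat.card_zmod n).symm)⟩

theorem order_eight {G : Type*} [Group G] [Finite G] (hc : Nat.card G = 8)
    (h8 : ∀ g : G, orderOf g ≠ 8) (f : G →* Equiv.Perm (Fin 6)) (hf : Function.Injective f) :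
    Nonempty (G ≃* Multiplicative (ZMod 2 × ZMod 2 × ZMod 2)) ∨
      Nonempty (G ≃* Multiplicative (ZMod 2 × ZMod 4)) ∨
      Nonempty (G ≃* DihedralGroup 4) := by
  classical
  have hord : ∀ g : G, g ^ 4 = 1 := by
    intro g
    have h1 : orderOf g ∣ 2 ^ 3 := by
      have := orderOf_dvd_natCard g
      rwa [hc] at this
    obtain ⟨m, hm, h2⟩ := (Nat.dvd_prime_pow Nat.prime_two).1 h1
    have := h8 g
    apply orderOf_dvd_iff_pow_eq_one.1
    rw [h2] at this ⊢
    interval_cases m <;> simp_all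
  by_cases hexp : ∀ a : G, a ^ 2 = 1
  · left
    exact elem_abelian 2 3 _ (by simp) (comm_of_exp_two hexp) hexp (by rw [hc]; norm_num)
  right
  push Not at hexp
  obtain ⟨x, hx2⟩ := hexp
  have hx4 : orderOf x = 4 := orderOf_eq_prime_pow (p := 2) (n := 1) (by simpa using hx2)
    (by simpa using hord x)
  set X := Subgroup.zpowers x with hX
  have hXc : Nat.card X = 4 := by rw [hX, Nat.card_zpowers, hx4]
  have hidx : X.index = 2 := by
    have := X.card_mul_index
    rw [hXc, hc] at this
    omega
  have hxp : ∀ y ∈ X, y = 1 ∨ y = x ∨ y = x ^ 2 ∨ y = x ^ 3 := by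
    intro y hy
    rw [hX, mem_zpowers_iff_mem_range_orderOf, hx4] at hy
    obtain ⟨k, hk, rfl⟩ := Finset.mem_image.1 hy
    rw [Finset.mem_range] at hk
    interval_cases k <;> simp
  have hx44 := hord x
  have hx22 : (x ^ 2) ^ 2 = 1 := by rw [← pow_mul]; exact hx44
  have hx32 : (x ^ 3) ^ 2 = x ^ 2 := by
    rw [← pow_mul, show 3 * 2 = 4 + 2 by norm_num, pow_add, hx44, one_mul]
  have hex : ∃ t, t ∉ X ∧ t ^ 2 = 1 := by
    by_contra hno
    push Not at hno
    have hall : ∀ g : G, g ≠ 1 → g = x ^ 2 ∨ g ^ 2 = x ^ 2 := by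
      intro g hg
      by_cases hgX : g ∈ X
      · rcases hxp g hgX with h | h | h | h
        · exact absurd h hg
        · right; rw [h]
        · left; exact h
        · right; rw [h, hx32]
      · right
        have h1 := hno g hgX
        have h4 : (g ^ 2) ^ 2 = 1 := by rw [← pow_mul]; exact hord g
        rcases hxp _ (Subgroup.sq_mem_of_index_two hidx g) with h | h | h | h
        · exact absurd h h1
        · rw [h] at h4; exact absurd h4 hx2
        · exact h
        · rw [h, hx32] at h4; exact absurd h4 hx2
    apply hx2
    apply hf
    rw [map_one]
    ext i : 1
    let _ := Fintype.ofFinite G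
    obtain ⟨a, b, hab, hfab⟩ := Fintype.exists_ne_map_eq_of_card_lt (fun g : G => f g i) (by
      rw [← Nat.card_eq_fintype_card (α := G), hc]; simp)
    have hfix : f (a⁻¹ * b) i = i := by
      rw [map_mul, map_inv, Equiv.Perm.mul_apply, Equiv.Perm.inv_eq_iff_eq]
      exact hfab.symm
    rcases hall (a⁻¹ * b) (by rwa [ne_eq, inv_mul_eq_one]) with h | h
    · rw [← h, hfix]; rfl
    · rw [← h, map_pow, sq, Equiv.Perm.mul_apply, hfix, hfix]; rfl
  obtain ⟨t, htX, ht2⟩ := hex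
  have ht1 : t ≠ 1 := fun h => htX (h ▸ X.one_mem)
  have htt : t⁻¹ = t := inv_eq_of_mul_eq_one_left (by rw [← sq, ht2])
  have hnorm : X.Normal := Subgroup.normal_of_index_eq_two hidx
  have hconj : t * x * t⁻¹ = x ∨ t * x * t⁻¹ = x ^ 3 := by
    have h1 := hnorm.conj_mem x (Subgroup.mem_zpowers x) t
    have h2 : (t * x * t⁻¹) ^ 2 ≠ 1 := by
      rw [conj_pow]
      intro h
      apply hx2
      simpa [mul_assoc] using congrArg (fun z => t⁻¹ * z * t) h
    rcases hxp _ h1 with h | h | h | h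
    · rw [h] at h2; simp at h2
    · exact Or.inl h
    · rw [h] at h2; exact absurd hx22 h2
    · exact Or.inr h
  have hT : Nat.card (Subgroup.zpowers t) = 2 := by
    rw [Nat.card_zpowers]; exact orderOf_eq_prime ht2 ht1
  have hTp : ∀ y ∈ Subgroup.zpowers t, y = 1 ∨ y = t := by
    intro y hy
    rw [mem_zpowers_iff_mem_range_orderOf, orderOf_eq_prime ht2 ht1] at hy
    obtain ⟨k, hk, rfl⟩ := Finset.mem_image.1 hy
    rw [Finset.mem_range] at hk
    interval_cases k <;> simp
  rcases hconj with h | h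
  · left
    have hcm : Commute t x := by
      rw [mul_inv_eq_iff_eq_mul] at h; exact h
    have hcc : ∀ (a : Subgroup.zpowers t) (b : X),
        Commute ((Subgroup.zpowers t).subtype a) (X.subtype b) := by
      rintro ⟨a, k, rfl⟩ ⟨b, l, rfl⟩
      exact (hcm.zpow_zpow k l)
    let F := MonoidHom.noncommCoprod (Subgroup.zpowers t).subtype X.subtype hcc
    have hF : Function.Injective F := by
      rw [MonoidHom.noncommCoprod_injective]
      refine ⟨Subgroup.subtype_injective _, Subgroup.subtype_injective _, ?_⟩
      rw [Subgroup.range_subtype, Subgroup.range_subtype, Subgroup.disjoint_def]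
      intro y hy hyX
      rcases hTp y hy with h | h
      · exact h
      · exact absurd (h ▸ hyX) htX
    have hB : Function.Bijective F := (Nat.bijective_iff_injective_and_card F).2
      ⟨hF, by rw [Nat.card_prod, hT, hXc, hc]⟩
    obtain ⟨e1⟩ : Nonempty (Subgroup.zpowers t ≃* Multiplicative (ZMod 2)) :=
      ⟨mulEquivOfCyclicCardEq (by rw [hT]; exact (Nat.card_zmod 2).symm)⟩
    obtain ⟨e2⟩ : Nonempty (X ≃* Multiplicative (ZMod 4)) :=
      ⟨mulEquivOfCyclicCardEq (by rw [hXc]; exact (Nat.card_zmod 4).symm)⟩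
    exact ⟨(MulEquiv.ofBijective F hB).symm.trans ((e1.prodCongr e2).trans
      (MulEquiv.prodMultiplicative (ZMod 2) (ZMod 4)).symm)⟩
  · right
    have htx : ∀ k : ℤ, t * x ^ k = x ^ (-k) * t := by
      intro k
      have h' : t * x * t⁻¹ = x⁻¹ := by
        rw [h]
        exact (inv_eq_of_mul_eq_one_left (by rw [← pow_succ]; exact hx44)).symm
      have h2 := congrArg (· ^ k) h'
      simp only [conj_zpow, inv_zpow'] at h2
      rwa [mul_inv_eq_iff_eq_mul] at h2
    have key : ∀ m n : ℤ, (m : ZMod 4) = n → x ^ m = x ^ n := by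
      intro m n hmn
      rw [zpow_eq_zpow_iff_modEq, hx4]
      exact (ZMod.intCast_eq_intCast_iff m n 4).1 hmn
    have htx' : ∀ k : ℤ, x ^ k * t = t * x ^ (-k) := by
      intro k
      rw [htx, neg_neg]
    let F : DihedralGroup 4 → G := fun d => match d with
      | .r i => x ^ (i.val : ℤ)
      | .sr i => t * x ^ (i.val : ℤ)
    have hFr : ∀ i, F (.r i) = x ^ (i.val : ℤ) := fun _ => rfl
    have hFs : ∀ i, F (.sr i) = t * x ^ (i.val : ℤ) := fun _ => rfl
    have ht2' : t * t = 1 := by rw [← sq, ht2]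
    let Fh : DihedralGroup 4 →* G := MonoidHom.mk' F (by
      rintro (i | i) (j | j)
      · rw [DihedralGroup.r_mul_r, hFr, hFr, hFr, ← zpow_add]
        exact key _ _ (by simp)
      · rw [DihedralGroup.r_mul_sr, hFr, hFs, hFs, ← mul_assoc, htx', mul_assoc, ← zpow_add]
        congr 1
        exact key _ _ (by simp; ring)
      · rw [DihedralGroup.sr_mul_r, hFr, hFs, hFs, mul_assoc, ← zpow_add]
        congr 1
        exact key _ _ (by simp)
      · rw [DihedralGroup.sr_mul_sr, hFr, hFs, hFs, mul_assoc, ← mul_assoc _ t, htx', mul_assoc t,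
          ← mul_assoc t t, ht2', one_mul, ← zpow_add]
        exact key _ _ (by simp; ring))
    have hinj : Function.Injective Fh := by
      rw [injective_iff_map_eq_one]
      rintro (i | i) hi
      · have h1 : x ^ (i.val : ℤ) = 1 := hi
        rw [zpow_natCast] at h1
        have h2 := orderOf_dvd_of_pow_eq_one h1
        rw [hx4] at h2
        have h3 := Nat.eq_zero_of_dvd_of_lt h2 (ZMod.val_lt i)
        rw [ZMod.val_eq_zero] at h3
        rw [h3]
        rfl
      · exfalso
        have h1 : t * x ^ (i.val : ℤ) = 1 := hi
        apply htX
        rw [mul_eq_one_iff_eq_inv] at h1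
        rw [h1]
        exact X.inv_mem (X.zpow_mem (Subgroup.mem_zpowers x) _)
    have hB : Function.Bijective Fh := (Nat.bijective_iff_injective_and_card Fh).2
      ⟨hinj, by rw [DihedralGroup.nat_card, hc]⟩
    exact ⟨(MulEquiv.ofBijective Fh hB).symm⟩

theorem mathieu_pow_card {G : Type*} [Group G] [Finite G]
    (hG : HasSmallMathieuRep3 G) (h8 : ∀ g : G, orderOf g ≠ 8) :
    ∃ a b c, a ≤ 3 ∧ b ≤ 2 ∧ c ≤ 1 ∧ Nat.card G = 2 ^ a * 3 ^ b * 5 ^ c := by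
  have := Nat.fact_prime_two
  have := Nat.fact_prime_three
  have : Fact (Nat.Prime 5) := ⟨by norm_num⟩
  have : Fact (Nat.Prime 11) := ⟨by norm_num⟩
  have hne : ∀ g : G, g ≠ 1 → orderOf g ≠ 1 := fun g hg h => hg (orderOf_eq_one_iff.1 h)
  have n16 : ¬ 2 ^ 4 ∣ Nat.card G := by
    refine mathieu_not_dvd hG 2 4 4 (fun g hg h1 => ?_) (fun n hn => by omega)
    have := hne g h1
    have := h8 g
    have hm := mathieu_order hG g
    generalize orderOf g = k at *
    rcases hm with rfl | rfl | rfl | rfl | rfl | rfl | rfl | rfl <;>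
      first | omega | simp [mathieuCharValue]
  have n27 : ¬ 3 ^ 3 ∣ Nat.card G := by
    refine mathieu_not_dvd hG 3 3 3 (fun g hg h1 => ?_) (fun n hn => by omega)
    have := hne g h1
    have hm := mathieu_order hG g
    generalize orderOf g = k at *
    rcases hm with rfl | rfl | rfl | rfl | rfl | rfl | rfl | rfl <;>
      first | omega | simp [mathieuCharValue]
  have n25 : ¬ 5 ^ 2 ∣ Nat.card G := by
    refine mathieu_not_dvd hG 5 2 2 (fun g hg h1 => ?_) (fun n hn => by omega)
    have := hne g h1
    have hm := mathieu_order hG g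
    generalize orderOf g = k at *
    rcases hm with rfl | rfl | rfl | rfl | rfl | rfl | rfl | rfl <;>
      first | omega | simp [mathieuCharValue]
  have n11 : ¬ 11 ^ 1 ∣ Nat.card G := by
    refine mathieu_not_dvd hG 11 1 1 (fun g hg h1 => ?_) (fun n hn => by omega)
    have := hne g h1
    have hm := mathieu_order hG g
    generalize orderOf g = k at *
    rcases hm with rfl | rfl | rfl | rfl | rfl | rfl | rfl | rfl <;>
      first | omega | simp [mathieuCharValue]
  have hpr : ∀ p, p.Prime → p ∣ Nat.card G → p = 2 ∨ p = 3 ∨ p = 5 := by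
    intro p hp hd
    have : Fact p.Prime := ⟨hp⟩
    obtain ⟨g, hg⟩ := exists_prime_orderOf_dvd_card' p hd
    have := mathieu_order hG g
    rw [hg] at this
    rcases this with rfl | rfl | rfl | rfl | rfl | rfl | rfl | rfl <;> norm_num at hp <;> simp_all
  have h0 : Nat.card G ≠ 0 := Nat.card_pos.ne'
  generalize Nat.card G = N at *
  obtain ⟨a, m, hm2, rfl⟩ := Nat.exists_eq_pow_mul_and_not_dvd h0 2 (by norm_num)
  obtain ⟨b, k, hk3, rfl⟩ := Nat.exists_eq_pow_mul_and_not_dvd (right_ne_zero_of_mul h0) 3 (by norm_num)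
  obtain ⟨c, l, hl5, rfl⟩ := Nat.exists_eq_pow_mul_and_not_dvd
    (right_ne_zero_of_mul (right_ne_zero_of_mul h0)) 5 (by norm_num)
  refine ⟨a, b, c, ?_, ?_, ?_, ?_⟩
  · by_contra h
    exact n16 (Dvd.dvd.mul_right (pow_dvd_pow 2 (by omega)) _)
  · by_contra h
    exact n27 (Dvd.dvd.mul_left (Dvd.dvd.mul_right (pow_dvd_pow 3 (by omega)) _) _)
  · by_contra h
    exact n25 (Dvd.dvd.mul_left (Dvd.dvd.mul_left (Dvd.dvd.mul_right
      (pow_dvd_pow 5 (by omega)) _) _) _)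
  · have hl : l = 1 := by
      by_contra hl1
      obtain ⟨p, hp, hpl⟩ := Nat.exists_prime_and_dvd hl1
      have h1 : p ∣ 3 ^ b * (5 ^ c * l) := Dvd.dvd.mul_left (Dvd.dvd.mul_left hpl _) _
      rcases hpr p hp (Dvd.dvd.mul_left h1 _) with rfl | rfl | rfl
      · exact hm2 h1
      · exact hk3 (Dvd.dvd.mul_left hpl _)
      · exact hl5 hpl
    rw [hl]; ring

theorem mathieu_no_prod {G : Type*} [Group G] [Finite G]
    (hnil : Group.IsNilpotent G) {p q i j : ℕ}
    [hp : Fact p.Prime] [hq : Fact q.Prime] (hpq : p ≠ q) {x y : G} (hx : orderOf x = p ^ i)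
    (hy : orderOf y = q ^ j) : orderOf (x * y) = p ^ i * q ^ j := by
  rw [(nilp_commute hnil hpq hx.dvd hy.dvd).orderOf_mul_eq_mul_orderOf_of_coprime, hx, hy]
  rw [hx, hy]
  exact Nat.Coprime.pow _ _ ((Nat.coprime_primes hp.out hq.out).2 hpq)

theorem nilpotent_of_condition4 (G : Type*) [Group G] [Fintype G] (h : Condition4 G)
    (hnil : Group.IsNilpotent G) :
    Subsingleton G ∨
      Nonempty (G ≃* Multiplicative (ZMod 2)) ∨
      Nonempty (G ≃* Multiplicative (ZMod 3)) ∨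
      Nonempty (G ≃* Multiplicative (ZMod 4)) ∨
      Nonempty (G ≃* Multiplicative (ZMod 5)) ∨
      Nonempty (G ≃* Multiplicative (ZMod 6)) ∨
      Nonempty (G ≃* Multiplicative (ZMod 2 × ZMod 2)) ∨
      Nonempty (G ≃* Multiplicative (ZMod 3 × ZMod 3)) ∨
      Nonempty (G ≃* Multiplicative (ZMod 2 × ZMod 2 × ZMod 2)) ∨
      Nonempty (G ≃* Multiplicative (ZMod 2 × ZMod 4)) ∨
      Nonempty (G ≃* DihedralGroup 4) := by
  classical
  obtain ⟨hG, hS, -⟩ := h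
  have := Nat.fact_prime_two
  have := Nat.fact_prime_three
  have : Fact (Nat.Prime 5) := ⟨by norm_num⟩
  have h8 : ∀ g : G, orderOf g ≠ 8 := by
    intro g hg
    have hp : IsPGroup 2 (Subgroup.zpowers g) := by
      apply IsPGroup.of_card (n := 3)
      rw [Nat.card_zpowers, hg]; norm_num
    obtain ⟨P, hP⟩ := hp.exists_le_sylow
    obtain ⟨f, hf⟩ := hS P
    have h1 : orderOf (⟨g, hP (Subgroup.mem_zpowers g)⟩ : P) = 8 := by
      rw [← hg]; exact Subgroup.orderOf_mk _ _
    exact perm6_order (f ⟨g, hP (Subgroup.mem_zpowers g)⟩) (by rw [orderOf_injective f hf, h1])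
  obtain ⟨a, b, c, ha, hb, hc, hcard⟩ := mathieu_pow_card hG h8
  have hel : ∀ p : ℕ, p.Prime → p ∣ Nat.card G → ∃ g : G, orderOf g = p := by
    intro p hp hd
    have : Fact p.Prime := ⟨hp⟩
    exact exists_prime_orderOf_dvd_card' p hd
  have hbad : ∀ g : G, orderOf g ≠ 10 ∧ orderOf g ≠ 15 ∧ orderOf g ≠ 12 := by
    intro g
    have := mathieu_order hG g
    omega
  -- the prime 5
  by_cases hc1 : c = 1
  · subst hc1
    obtain ⟨x, hx⟩ := hel 5 (by norm_num) (by rw [hcard]; exact Dvd.intro_left _ rfl)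
    have ha0 : a = 0 := by
      by_contra ha0
      obtain ⟨y, hy⟩ := hel 2 (by norm_num) (by
        rw [hcard, mul_assoc]; exact Dvd.dvd.mul_right (dvd_pow_self 2 ha0) _)
      have := mathieu_no_prod hnil (p := 5) (q := 2) (i := 1) (j := 1) (by norm_num) hx hy
      exact (hbad _).1 this
    have hb0 : b = 0 := by
      by_contra hb0
      obtain ⟨y, hy⟩ := hel 3 (by norm_num) (by
        rw [hcard, mul_assoc]
        exact Dvd.dvd.mul_left (Dvd.dvd.mul_right (dvd_pow_self 3 hb0) _) _)
      have := mathieu_no_prod hnil (p := 5) (q := 3) (i := 1) (j := 1) (by norm_num) hx hy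
      exact (hbad _).2.1 this
    subst ha0 hb0
    have h5 := cyclic_equiv 5 x hx (by rw [hcard]; norm_num)
    tauto
  have hc0 : c = 0 := by omega
  subst hc0
  rw [pow_zero, mul_one] at hcard
  -- mixed case
  by_cases hab : a ≠ 0 ∧ b ≠ 0
  · obtain ⟨ha0, hb0⟩ := hab
    obtain ⟨x, hx⟩ := hel 2 (by norm_num) (by
        rw [hcard]; exact Dvd.dvd.mul_right (dvd_pow_self 2 ha0) _)
    obtain ⟨y, hy⟩ := hel 3 (by norm_num) (by
        rw [hcard]; exact Dvd.dvd.mul_left (dvd_pow_self 3 hb0) _)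
    have h4 : ∀ g : G, orderOf g ≠ 4 := by
      intro g hg
      have := mathieu_no_prod hnil (p := 2) (q := 3) (i := 2) (j := 1) (by norm_num) hg hy
      exact (hbad _).2.2 this
    have hne : ∀ g : G, g ≠ 1 → orderOf g ≠ 1 := fun g hg h => hg (orderOf_eq_one_iff.1 h)
    have two : ∀ (A : Subgroup G) (i : ℕ), i ≤ 3 → Nat.card A = 2 ^ i →
        ∀ a : A, a ≠ 1 → orderOf a = 2 := by
      intro A i hi hA a ha
      have h1 : orderOf (a : G) ∣ 2 ^ 3 :=
        (hA ▸ A.orderOf_dvd_natCard a.2).trans (pow_dvd_pow 2 hi)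
      have h2 := hne (a : G) (by simpa using ha)
      have h3 := h4 a
      have h5 := h8 a
      rw [← Subgroup.orderOf_coe]
      have hm := mathieu_order hG (a : G)
      generalize orderOf (a : G) = k at *
      rcases hm with rfl | rfl | rfl | rfl | rfl | rfl | rfl | rfl <;>
        omega
    have three : ∀ (A : Subgroup G) (i : ℕ), i ≤ 2 → Nat.card A = 3 ^ i →
        ∀ a : A, a ≠ 1 → orderOf a = 3 := by
      intro A i hi hA a ha
      have h1 : orderOf (a : G) ∣ 3 ^ 2 :=
        (hA ▸ A.orderOf_dvd_natCard a.2).trans (pow_dvd_pow 3 hi)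
      have h2 := hne (a : G) (by simpa using ha)
      rw [← Subgroup.orderOf_coe]
      have hm := mathieu_order hG (a : G)
      generalize orderOf (a : G) = k at *
      rcases hm with rfl | rfl | rfl | rfl | rfl | rfl | rfl | rfl <;>
        omega
    have hb1 : b = 1 := by
      by_contra hb1
      obtain ⟨A, hA⟩ := Sylow.exists_subgroup_card_pow_prime (G := G) 2 (n := 1)
        (by rw [hcard]; exact Dvd.dvd.mul_right (pow_dvd_pow 2 (by omega)) _)
      obtain ⟨B, hB⟩ := Sylow.exists_subgroup_card_pow_prime (G := G) 3 (n := 2)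
        (by rw [hcard]; exact Dvd.dvd.mul_left (pow_dvd_pow 3 (by omega)) _)
      obtain ⟨f, hf⟩ := nilp_prod hnil (by norm_num) A B hA hB
      obtain ⟨n, hn⟩ := mathieu_two_three hG f hf (two A 1 (by norm_num) hA)
        (three B 2 (by norm_num) hB) 1
      simp only [MonoidHom.one_apply, Finset.sum_const, Finset.card_univ, nsmul_eq_mul,
        ← Nat.card_eq_fintype_card, hA, hB] at hn
      norm_num at hn
      norm_cast at hn
      omega
    have ha1 : a = 1 := by
      by_contra ha1
      obtain ⟨A, hA⟩ := Sylow.exists_subgroup_card_pow_prime (G := G) 2 (n := 2)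
        (by rw [hcard]; exact Dvd.dvd.mul_right (pow_dvd_pow 2 (by omega)) _)
      obtain ⟨B, hB⟩ := Sylow.exists_subgroup_card_pow_prime (G := G) 3 (n := 1)
        (by rw [hcard]; exact Dvd.dvd.mul_left (pow_dvd_pow 3 (by omega)) _)
      obtain ⟨f, hf⟩ := nilp_prod hnil (by norm_num) A B hA hB
      let e : B ≃* Multiplicative (ZMod 3) := mulEquivOfPrimeCardEq (p := 3)
        (by simpa using hB) (Nat.card_zmod 3)
      obtain ⟨n, hn⟩ := mathieu_two_three hG f hf (two A 2 (by norm_num) hA)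
        (three B 1 (by norm_num) hB)
        ((ZMod.stdAddChar (N := 3)).toMonoidHom.comp e.toMonoidHom)
      have hsum : ∑ b : B, ((ZMod.stdAddChar (N := 3)).toMonoidHom.comp e.toMonoidHom) b = 0 := by
        have h1 := AddChar.sum_eq_zero_of_ne_one (ψ := ZMod.stdAddChar (N := 3)) (by
          have := ZMod.isPrimitive_stdAddChar 3 (one_ne_zero)
          simpa using this)
        rw [← h1]
        exact Fintype.sum_equiv (e.toEquiv.trans Multiplicative.toAdd) _ _ (fun b => rfl)
      rw [hsum] at hn
      simp only [← Nat.card_eq_fintype_card, hA, hB] at hn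
      norm_num at hn
      norm_cast at hn
      omega
    subst ha1 hb1
    have h6 := cyclic_equiv 6 (x * y)
      (mathieu_no_prod hnil (p := 2) (q := 3) (i := 1) (j := 1) (by norm_num) hx hy)
      (by rw [hcard]; norm_num)
    tauto
  by_cases ha0 : a = 0
  · subst ha0
    rw [pow_zero, one_mul] at hcard
    interval_cases b
    · left
      exact (Nat.card_eq_one_iff_unique.1 (by simpa using hcard)).1
    · obtain ⟨x, hx⟩ := hel 3 (by norm_num) (by rw [hcard]; norm_num)
      have h3 := cyclic_equiv 3 x hx (by rw [hcard]; norm_num)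
      tauto
    · have h9 := elem_abelian (G := G) 3 2 (ZMod 3 × ZMod 3) (by simp)
        (IsPGroup.isMulCommutative_of_card_eq_prime_sq hcard).is_comm.comm (fun g => by
          have h1 : orderOf g ∣ 3 ^ 2 := hcard ▸ orderOf_dvd_natCard g
          apply orderOf_dvd_iff_pow_eq_one.1
          have hm := mathieu_order hG g
          generalize orderOf g = k at *
          rcases hm with rfl | rfl | rfl | rfl | rfl | rfl | rfl | rfl <;>
            omega) hcard
      tauto
  have hb0 : b = 0 := by tauto
  subst hb0
  rw [pow_zero, mul_one] at hcard
  have ha3 : a = 1 ∨ a = 2 ∨ a = 3 := by omega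
  rcases ha3 with rfl | rfl | rfl
  · obtain ⟨x, hx⟩ := hel 2 (by norm_num) (by rw [hcard]; norm_num)
    have h2 := cyclic_equiv 2 x hx (by rw [hcard]; norm_num)
    tauto
  · by_cases hex : ∃ x : G, orderOf x = 4
    · obtain ⟨x, hx⟩ := hex
      have h4 := cyclic_equiv 4 x hx (by rw [hcard]; norm_num)
      tauto
    · have h4 := elem_abelian (G := G) 2 2 (ZMod 2 × ZMod 2) (by simp)
        (IsPGroup.isMulCommutative_of_card_eq_prime_sq hcard).is_comm.comm (fun g => by
          have h1 : orderOf g ∣ 2 ^ 2 := hcard ▸ orderOf_dvd_natCard g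
          have h2 : orderOf g ≠ 4 := fun h => hex ⟨g, h⟩
          apply orderOf_dvd_iff_pow_eq_one.1
          have hm := mathieu_order hG g
          generalize orderOf g = k at *
          rcases hm with rfl | rfl | rfl | rfl | rfl | rfl | rfl | rfl <;>
            omega) hcard
      tauto
  · obtain ⟨f, hf⟩ := hS default
    have hP : ∀ g : G, g ∈ (default : Sylow 2 G) := by
      intro g
      have h1 := (default : Sylow 2 G).card_eq_multiplicity
      have h2 : ((default : Sylow 2 G) : Subgroup G) = ⊤ := by
        apply Subgroup.eq_top_of_card_eq
        rw [h1, hcard, Nat.Prime.factorization_pow Nat.prime_two]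
        simp
      have : g ∈ ((default : Sylow 2 G) : Subgroup G) := by rw [h2]; trivial
      exact this
    let ι : G →* (default : Sylow 2 G) := (MonoidHom.id G).codRestrict _ hP
    have h := order_eight (G := G) (by rw [hcard]; norm_num) h8 (f.comp ι) (by
      refine hf.comp ?_
      intro u v huv
      exact congrArg Subtype.val huv)
    tauto
end
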